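/- arXiv:1509.01870 — 2 statements merged into one kernel-verified Lean document; each statement's English description precedes it below -/
import Mathlib

section
/- A discrete group G is C*-simple if and only if for every bounded linear functional φ on C*_λ(G) and every a ∈ C*_λ(G), the infimum over b in K of |φ(b) − φ(1)τ_λ(a)| equals 0, where K denotes the norm closed convex hull of {λ_g a λ_g⁻¹ : g ∈ G}. -/
noncomputable section
open scoped ENNReal ComplexOrder lp
open MeasureTheory
set_option maxHeartbeats 1000000
set_option synthInstance.maxHeartbeats 1000000

universe u

variable {G : Type u} [Group G]

theorem translat_mem (g : G) (f : ℓ²(G, ℂ)) : Memℓp (fun h => f (g⁻¹ * h)) 2 := by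
  have hf : Summable fun i : G => ‖f i‖ ^ (2 : ℝ≥0∞).toReal :=
    (memℓp_gen_iff (by norm_num)).1 (lp.memℓp f)
  exact memℓp_gen ((Equiv.mulLeft g⁻¹).summable_iff.2 hf)

/-- The left regular representation of `g ∈ G` as a linear isometric bijection of `ℓ²(G)`,
given by `(λ_g ξ)(h) = ξ(g⁻¹ h)`. -/
def lregE (g : G) : ℓ²(G, ℂ) ≃ₗᵢ[ℂ] ℓ²(G, ℂ) :=
{ toFun := fun f => ⟨fun h => f (g⁻¹ * h), translat_mem g f⟩
  invFun := fun f => ⟨fun h => f (g * h), by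
    have := translat_mem g⁻¹ f; simp only [inv_inv] at this; exact this⟩
  map_add' := by intro f₁ f₂; ext h; simp [lp.coeFn_add]; rfl
  map_smul' := by intro c f; ext h; simp [lp.coeFn_smul]
  left_inv := by intro f; ext h; simp
  right_inv := by intro f; ext h; simp
  norm_map' := by
    intro f
    rw [lp.norm_eq_tsum_rpow (by norm_num) f, lp.norm_eq_tsum_rpow (by norm_num)]
    congr 1
    exact (Equiv.mulLeft g⁻¹).tsum_eq (fun h => ‖f h‖ ^ (2 : ℝ≥0∞).toReal) }

/-- The left regular representation `λ` as bounded operators on `ℓ²(G)`. -/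
def lreg (g : G) : ℓ²(G, ℂ) →L[ℂ] ℓ²(G, ℂ) :=
  (lregE g).toContinuousLinearEquiv.toContinuousLinearMap

variable (G) in
/-- The reduced group C*-algebra `C*_λ(G)`: the norm-closed star subalgebra of the algebra of
bounded operators on `ℓ²(G)` generated by the image of the left regular representation. -/
def redCstar : StarSubalgebra ℂ (ℓ²(G, ℂ) →L[ℂ] ℓ²(G, ℂ)) :=
  (StarAlgebra.adjoin ℂ (Set.range (lreg (G := G)))).topologicalClosure

/-- `λ_g` as an element of the reduced group C*-algebra. -/
def uu (g : G) : redCstar G :=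
  ⟨lreg g, StarSubalgebra.le_topologicalClosure _ (StarAlgebra.subset_adjoin ℂ _ ⟨g, rfl⟩)⟩

variable (G) in
/-- `G` is C*-simple: `C*_λ(G)` has no closed two-sided ideals other than `{0}` and the
whole algebra. -/
def IsCstarSimple : Prop :=
  ∀ I : TwoSidedIdeal (redCstar G), IsClosed (I : Set (redCstar G)) → I = ⊥ ∨ I = ⊤

/-- The vector `δ_e ∈ ℓ²(G)`. -/
def deltaOne : ℓ²(G, ℂ) := letI := Classical.decEq G; lp.single 2 (1 : G) 1

variable (G) in
/-- The canonical tracial state `τ_λ(a) = ⟨a δ_e, δ_e⟩` on the reduced C*-algebra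
(as a scalar-valued function). -/
def tauF (a : redCstar G) : ℂ :=
  inner (𝕜 := ℂ) (deltaOne (G := G)) ((a : ℓ²(G, ℂ) →L[ℂ] ℓ²(G, ℂ)) (deltaOne (G := G)))

attribute [irreducible] redCstar lreg lregE deltaOne uu tauF

set_option linter.unusedSectionVars false
section states
variable {B : Type*} [CStarAlgebra B] [PartialOrder B] [StarOrderedRing B]

/-- States, as norm-contractive unital functionals. -/
def IsSt (φ : B →L[ℂ] ℂ) : Prop := φ 1 = 1 ∧ ∀ b, ‖φ b‖ ≤ ‖b‖

theorem IsSt.im_eq_zero {φ : B →L[ℂ] ℂ} (h : IsSt φ) {b : B} (hb : IsSelfAdjoint b) :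
    (φ b).im = 0 := by
  have key : ∀ t : ℝ, ((φ b).im + t) ^ 2 ≤ ‖b‖ ^ 2 + t ^ 2 := by
    intro t
    have h1 := h.2 (b + (Complex.I * t : ℂ) • 1)
    have h2 : ‖b + (Complex.I * t : ℂ) • (1 : B)‖ ^ 2 ≤ ‖b‖ ^ 2 + t ^ 2 := by
      rw [sq, ← CStarRing.norm_star_mul_self]
      have : star (b + (Complex.I * t : ℂ) • (1 : B)) * (b + (Complex.I * t : ℂ) • (1 : B))
          = b * b + ((t ^ 2 : ℝ) : ℂ) • (1 : B) := by
        simp only [star_add, star_smul, star_one, hb.star_eq]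
        simp only [add_mul, mul_add, smul_mul_assoc, mul_smul_comm, one_mul, mul_one]
        have e : (star (Complex.I * (t : ℂ)) * (Complex.I * t)) = ((t ^ 2 : ℝ) : ℂ) := by
          simp; ring_nf; simp
        have e2 : star (Complex.I * (t : ℂ)) = - (Complex.I * t) := by simp
        rw [smul_add, smul_smul, mul_comm (Complex.I * (t : ℂ)), e, e2]
        module
      rw [this]
      refine (norm_add_le _ _).trans ?_
      gcongr
      · rw [sq]; exact norm_mul_le _ _
      · rw [norm_smul]
        rcases subsingleton_or_nontrivial B with hB | hB
        · rw [Subsingleton.elim (1 : B) 0]; simp; positivity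
        · rw [CStarRing.norm_one, mul_one, Complex.norm_real, Real.norm_of_nonneg (by positivity)]
    have h3 : φ (b + (Complex.I * t : ℂ) • 1) = φ b + Complex.I * t := by
      rw [map_add, map_smul, h.1]; simp
    rw [h3] at h1
    have h4 := Complex.abs_im_le_norm (φ b + Complex.I * t)
    have h5 : (φ b + Complex.I * t).im = (φ b).im + t := by simp
    rw [h5] at h4
    calc ((φ b).im + t) ^ 2 = |(φ b).im + t| ^ 2 := (sq_abs _).symm
      _ ≤ ‖b + (Complex.I * t : ℂ) • (1 : B)‖ ^ 2 := by
          apply pow_le_pow_left₀ (abs_nonneg _) (h4.trans h1)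
      _ ≤ _ := h2
  by_contra hne
  have := key ((‖b‖ ^ 2 + 1) / (2 * (φ b).im))
  have e : ((φ b).im + (‖b‖ ^ 2 + 1) / (2 * (φ b).im)) ^ 2
      = (φ b).im ^ 2 + (‖b‖ ^ 2 + 1) + ((‖b‖ ^ 2 + 1) / (2 * (φ b).im)) ^ 2 := by
    field_simp; ring
  rw [e] at this
  nlinarith [sq_nonneg (φ b).im]

theorem IsSt.nonneg {φ : B →L[ℂ] ℂ} (h : IsSt φ) {b : B} (hb : 0 ≤ b) : 0 ≤ φ b := by
  have him := h.im_eq_zero (IsSelfAdjoint.of_nonneg hb)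
  have h1 : b ≤ algebraMap ℝ B ‖b‖ := IsSelfAdjoint.le_algebraMap_norm_self (.of_nonneg hb)
  have h2 : ‖algebraMap ℝ B ‖b‖ - b‖ ≤ ‖algebraMap ℝ B ‖b‖‖ :=
    CStarAlgebra.norm_le_norm_of_nonneg_of_le (sub_nonneg.2 h1) (sub_le_self _ hb)
  have h3 : ‖algebraMap ℝ B ‖b‖‖ ≤ ‖b‖ := by
    rcases subsingleton_or_nontrivial B with hB | hB
    · rw [Subsingleton.elim (algebraMap ℝ B ‖b‖) 0]; simp
    · rw [norm_algebraMap, CStarRing.norm_one]; simp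
  have h4 := (h.2 (algebraMap ℝ B ‖b‖ - b)).trans (h2.trans h3)
  have h5 : φ (algebraMap ℝ B ‖b‖ - b) = (‖b‖ : ℂ) - φ b := by
    rw [map_sub, Algebra.algebraMap_eq_smul_one, ← Complex.coe_smul, map_smul, h.1]; simp
  rw [h5] at h4
  have h6 := (Complex.re_le_norm _).trans h4
  simp at h6
  rw [Complex.le_def]
  simp [him, h6]

/-- The positive linear map of a state. -/
def IsSt.toPos {φ : B →L[ℂ] ℂ} (h : IsSt φ) : B →ₚ[ℂ] ℂ :=
  PositiveLinearMap.mk₀ (φ : B →ₗ[ℂ] ℂ) (fun _ hx => h.nonneg hx)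

theorem IsSt.mono {φ : B →L[ℂ] ℂ} (h : IsSt φ) {a b : B} (hab : a ≤ b) : φ a ≤ φ b := by
  have := h.nonneg (sub_nonneg.2 hab)
  rw [map_sub] at this
  exact sub_nonneg.1 this

theorem IsSt.map_star {φ : B →L[ℂ] ℂ} (h : IsSt φ) (a : B) : φ (star a) = star (φ a) := 
  StarHomClass.map_star h.toPos a

theorem IsSt.cs {φ : B →L[ℂ] ℂ} (h : IsSt φ) {x : B} (hx : φ (star x * x) = 0) (b : B) :
    φ (b * x) = 0 := by
  have h1 := norm_inner_le_norm (𝕜 := ℂ) (h.toPos.toPreGNS (star b)) (h.toPos.toPreGNS x)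
  have h2 : ‖h.toPos.toPreGNS x‖ = 0 := by
    rw [PositiveLinearMap.preGNS_norm_def]
    have : h.toPos (star x * x) = 0 := hx
    simp [this]
  rw [h2, mul_zero, PositiveLinearMap.preGNS_inner_def] at h1
  have h3 : ‖φ (star (star b) * x)‖ ≤ 0 := h1
  rw [star_star] at h3
  exact norm_le_zero_iff.1 h3

theorem IsSt.cs' {φ : B →L[ℂ] ℂ} (h : IsSt φ) {x : B} (hx : φ (x * star x) = 0) (b : B) :
    φ (x * b) = 0 := by
  have := h.cs (x := star x) (by simpa using hx) (star b)
  rw [← star_mul, h.map_star] at this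
  simpa using this

end states

section weak
variable {B : Type*} [CStarAlgebra B] [PartialOrder B] [StarOrderedRing B]

/-- The state space with the weak-star topology. -/
def stSet (B : Type*) [CStarAlgebra B] : Set (WeakDual ℂ B) :=
  {φ | φ 1 = 1 ∧ ∀ b, ‖φ b‖ ≤ ‖b‖}

theorem stSet_isSt {φ : WeakDual ℂ B} (h : φ ∈ stSet B) : IsSt (WeakDual.toStrongDual φ) := h

theorem wd_eval_continuous (b : B) : Continuous (fun φ : WeakDual ℂ B => φ b) :=
  WeakDual.eval_continuous b

theorem isClosed_stSet : IsClosed (stSet B) := by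
  have : stSet B = {φ | φ 1 = 1} ∩ ⋂ b, {φ | ‖φ b‖ ≤ ‖b‖} := by
    ext φ; simp [stSet]
  rw [this]
  refine (isClosed_eq (wd_eval_continuous 1) continuous_const).inter ?_
  exact isClosed_iInter fun b =>
    isClosed_le (wd_eval_continuous b).norm continuous_const

theorem isCompact_stSet : IsCompact (stSet B) := by
  refine (WeakDual.isCompact_closedBall (𝕜 := ℂ) (E := B) 0 1).of_isClosed_subset
    isClosed_stSet ?_
  intro φ hφ
  simp only [Set.mem_preimage, mem_closedBall_zero_iff]
  exact ContinuousLinearMap.opNorm_le_bound _ zero_le_one (fun b => by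
    simpa using hφ.2 b)

theorem convex_stSet : Convex ℝ (stSet B) := by
  intro φ hφ ψ hψ a b ha hb hab
  refine ⟨?_, fun x => ?_⟩
  · change a • φ 1 + b • ψ 1 = 1
    rw [hφ.1, hψ.1, ← add_smul, hab, one_smul]
  · change ‖a • φ x + b • ψ x‖ ≤ _
    calc _ ≤ ‖a • φ x‖ + ‖b • ψ x‖ := norm_add_le _ _
      _ = a * ‖φ x‖ + b * ‖ψ x‖ := by
        rw [norm_smul, norm_smul, Real.norm_of_nonneg ha, Real.norm_of_nonneg hb]
      _ ≤ a * ‖x‖ + b * ‖x‖ := by gcongr <;> [exact hφ.2 x; exact hψ.2 x]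
      _ = ‖x‖ := by rw [← add_mul, hab, one_mul]

instance wd_ist : IsScalarTower ℝ ℂ (WeakDual ℂ B) :=
  ⟨fun r c φ => by apply DFunLike.ext; intro b; exact smul_assoc r c (φ b)⟩

instance wd_lcs : LocallyConvexSpace ℝ (WeakDual ℂ B) :=
  (WeakDual.withSeminorms (𝕜 := ℂ) (E := B)).toLocallyConvexSpace

theorem wd_separation {Q : Set (WeakDual ℂ B)} (hc : Convex ℝ Q) (hcl : IsClosed Q)
    {ψ : WeakDual ℂ B} (hψ : ψ ∉ Q) :
    ∃ (b : B) (u : ℝ), (∀ φ ∈ Q, (φ b).re < u) ∧ u < (ψ b).re := by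
  have hs := RCLike.geometric_hahn_banach_closed_point (𝕜 := ℂ) (E := WeakDual ℂ B) hc hcl hψ
  obtain ⟨f, u, h1, h2⟩ := hs
  obtain ⟨b, hb⟩ := LinearMap.dualEmbedding_surjective (topDualPairing ℂ B) f
  have hf : ∀ φ : WeakDual ℂ B, f φ = φ b := fun φ => by rw [← hb]; rfl
  refine ⟨b, u, fun φ hφ => ?_, ?_⟩
  · have := h1 φ hφ; rw [hf] at this; exact this
  · rw [hf] at h2; exact h2

/-- conjugation map on `B`. -/
def cj (U : G →* unitary B) (g : G) : B →L[ℂ] B :=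
  (ContinuousLinearMap.mul ℂ B (U g : B)).comp ((ContinuousLinearMap.mul ℂ B).flip (U g⁻¹ : B))

theorem cj_apply (U : G →* unitary B) (g : G) (b : B) :
    cj U g b = (U g : B) * b * (U g⁻¹ : B) := by simp [cj, mul_assoc]

theorem U_mul (U : G →* unitary B) (g h : G) : (U (g * h) : B) = U g * U h := by simp

theorem U_inv_mul (U : G →* unitary B) (g : G) : (U g⁻¹ : B) * U g = 1 := by
  rw [← U_mul]; simp

theorem U_mul_inv (U : G →* unitary B) (g : G) : (U g : B) * U g⁻¹ = 1 := by
  rw [← U_mul]; simp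

theorem cj_mul (U : G →* unitary B) (g h : G) (b : B) : cj U (g * h) b = cj U g (cj U h b) := by
  simp only [cj_apply, mul_inv_rev, U_mul, mul_assoc]

theorem cj_one (U : G →* unitary B) (b : B) : cj U 1 b = b := by simp [cj_apply]

theorem cj_unit (U : G →* unitary B) (g : G) : cj U g 1 = 1 := by
  rw [cj_apply, mul_one, U_mul_inv]

theorem cj_norm (U : G →* unitary B) (g : G) (b : B) : ‖cj U g b‖ = ‖b‖ := by
  rw [cj_apply, CStarRing.norm_mul_coe_unitary, CStarRing.norm_coe_unitary_mul]

/-- left action on functionals. -/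
def act (U : G →* unitary B) (g : G) (φ : WeakDual ℂ B) : WeakDual ℂ B :=
  StrongDual.toWeakDual ((WeakDual.toStrongDual φ).comp (cj U g⁻¹))

theorem act_apply (U : G →* unitary B) (g : G) (φ : WeakDual ℂ B) (b : B) :
    act U g φ b = φ (cj U g⁻¹ b) := rfl

theorem act_mul (U : G →* unitary B) (g h : G) (φ : WeakDual ℂ B) :
    act U (g * h) φ = act U g (act U h φ) := by
  apply DFunLike.ext; intro b
  simp only [act_apply, mul_inv_rev, cj_mul]

theorem act_one (U : G →* unitary B) (φ : WeakDual ℂ B) : act U 1 φ = φ := by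
  apply DFunLike.ext; intro b
  simp only [act_apply, inv_one, cj_one]

theorem act_inv_act (U : G →* unitary B) (g : G) (φ : WeakDual ℂ B) :
    act U g⁻¹ (act U g φ) = φ := by rw [← act_mul]; simp [act_one]

theorem act_act_inv (U : G →* unitary B) (g : G) (φ : WeakDual ℂ B) :
    act U g (act U g⁻¹ φ) = φ := by rw [← act_mul]; simp [act_one]

theorem act_comb (U : G →* unitary B) (g : G) (φ ψ : WeakDual ℂ B) (a b : ℝ) :
    act U g (a • φ + b • ψ) = a • act U g φ + b • act U g ψ := rfl

theorem act_stSet (U : G →* unitary B) (g : G) {φ : WeakDual ℂ B} (h : φ ∈ stSet B) :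
    act U g φ ∈ stSet B := by
  refine ⟨?_, fun b => ?_⟩
  · rw [act_apply, cj_unit, h.1]
  · rw [act_apply, ← cj_norm U g⁻¹ b]; exact h.2 _

/-- closed convex invariant nonempty sets of states. -/
structure Good (U : G →* unitary B) (S : Set (WeakDual ℂ B)) : Prop where
  sub : S ⊆ stSet B
  closed : IsClosed S
  conv : Convex ℝ S
  inv : ∀ g, ∀ φ ∈ S, act U g φ ∈ S
  ne : S.Nonempty

theorem Good.compact {U : G →* unitary B} {S : Set (WeakDual ℂ B)} (h : Good U S) :
    IsCompact S := isCompact_stSet.of_isClosed_subset h.closed h.sub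

theorem exists_minimal_good (U : G →* unitary B) {S : Set (WeakDual ℂ B)} (h : Good U S) :
    ∃ Q, Good U Q ∧ ∀ Q', Good U Q' → Q' ⊆ Q → Q' = Q := by
  obtain ⟨Q, -, hQ⟩ := zorn_superset_nonempty {S | Good U S} (fun c hc hch hne => by
    refine ⟨⋂₀ c, ?_, fun s hs => Set.sInter_subset_of_mem hs⟩
    obtain ⟨s0, hs0⟩ := hne
    have : Nonempty c := ⟨⟨s0, hs0⟩⟩
    refine ⟨(Set.sInter_subset_of_mem hs0).trans (hc hs0).sub,
      isClosed_sInter fun s hs => (hc hs).closed, convex_sInter fun s hs => (hc hs).conv,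
      fun g φ hφ s hs => (hc hs).inv g φ (hφ s hs), ?_⟩
    exact IsCompact.nonempty_sInter_of_directed_nonempty_isCompact_isClosed
      (by
        intro a ha b hb
        rcases hch.total ha hb with h' | h'
        · exact ⟨a, ha, subset_rfl, h'⟩
        · exact ⟨b, hb, h', subset_rfl⟩)
      (fun s hs => (hc hs).ne) (fun s hs => (hc hs).compact) (fun s hs => (hc hs).closed)) S h
  exact ⟨Q, hQ.prop, fun Q' hQ' hs => le_antisymm hs (hQ.le_of_le hQ' hs)⟩

theorem act_extreme {U : G →* unitary B} {Q : Set (WeakDual ℂ B)} (h : Good U Q) (g : G)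
    {y : WeakDual ℂ B} (hy : y ∈ Q.extremePoints ℝ) : act U g y ∈ Q.extremePoints ℝ := by
  rw [mem_extremePoints] at hy ⊢
  refine ⟨h.inv g y hy.1, fun x₁ h₁ x₂ h₂ hx => ?_⟩
  obtain ⟨a, b, ha, hb, hab, he⟩ := hx
  have := hy.2 (act U g⁻¹ x₁) (h.inv _ _ h₁) (act U g⁻¹ x₂) (h.inv _ _ h₂)
    ⟨a, b, ha, hb, hab, by rw [← act_comb, he, act_inv_act]⟩
  constructor
  · rw [← act_act_inv U g x₁, this.1]
  · rw [← act_act_inv U g x₂, this.2]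
end weak

section core
variable {B : Type*} [CStarAlgebra B] [PartialOrder B] [StarOrderedRing B]
variable {C : Type*} [CStarAlgebra C] [PartialOrder C] [StarOrderedRing C]
variable {T : Type*}

/-- bounded function as an element of `ℓ^∞`. -/
def mkInf (f : T → ℂ) (M : ℝ) (h : ∀ s, ‖f s‖ ≤ M) : ℓ^∞(T, ℂ) :=
  ⟨f, memℓp_infty ⟨M, by rintro _ ⟨s, rfl⟩; exact h s⟩⟩

theorem mkInf_apply (f : T → ℂ) (M : ℝ) (h : ∀ s, ‖f s‖ ≤ M) (s : T) : mkInf f M h s = f s := rfl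

theorem inf_bd (f : ℓ^∞(T, ℂ)) (s : T) : ‖f s‖ ≤ ‖f‖ := lp.norm_apply_le_norm (by simp) f s

theorem Dg_pos (Dg : ℓ^∞(T, ℂ) →⋆ₐ[ℂ] C) {f : ℓ^∞(T, ℂ)} (hf : ∀ s, 0 ≤ f s) : 0 ≤ Dg f := by
  let g : ℓ^∞(T, ℂ) := mkInf (fun s => ((Real.sqrt (f s).re : ℝ) : ℂ)) (Real.sqrt ‖f‖) (fun s => by
    rw [Complex.norm_real, Real.norm_of_nonneg (Real.sqrt_nonneg _)]
    exact Real.sqrt_le_sqrt ((Complex.re_le_norm _).trans (inf_bd f s)))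
  have : f = star g * g := by
    ext s
    have h1 := hf s
    rw [Complex.le_def] at h1
    have h3 : (star g * g) s = star (g s) * g s := rfl
    rw [h3, mkInf_apply]
    have h2 : (star ((Real.sqrt (f s).re : ℝ) : ℂ)) * ((Real.sqrt (f s).re : ℝ) : ℂ)
      = ((Real.sqrt (f s).re * Real.sqrt (f s).re : ℝ) : ℂ) := by simp
    rw [h2, Real.mul_self_sqrt h1.1]
    apply Complex.ext <;> simp
    exact h1.2.symm
  rw [this, map_mul, map_star]
  exact star_mul_self_nonneg _

/-- evaluation map. -/
def evq (q : T → WeakDual ℂ B) (hq : ∀ s, q s ∈ stSet B) : B →ₗ[ℂ] ℓ^∞(T, ℂ) where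
  toFun b := mkInf (fun s => q s b) ‖b‖ (fun s => (hq s).2 b)
  map_add' a b := by ext s; exact map_add (q s) a b
  map_smul' c b := by ext s; exact map_smul (q s) c b

theorem evq_apply (q : T → WeakDual ℂ B) (hq : ∀ s, q s ∈ stSet B) (b : B) (s : T) :
    evq q hq b s = q s b := rfl

/-- Poisson map. -/
def Pm (Dg : ℓ^∞(T, ℂ) →⋆ₐ[ℂ] C) (q : T → WeakDual ℂ B) (hq : ∀ s, q s ∈ stSet B) : B →L[ℂ] C :=
  LinearMap.mkContinuous ((Dg : ℓ^∞(T, ℂ) →ₗ[ℂ] C).comp (evq q hq)) 1 (fun b => by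
    rw [one_mul]
    refine (NonUnitalStarAlgHom.norm_apply_le Dg (evq q hq b)).trans ?_
    exact lp.norm_le_of_forall_le (norm_nonneg b) (fun s => (hq s).2 b))

theorem Pm_apply (Dg : ℓ^∞(T, ℂ) →⋆ₐ[ℂ] C) (q : T → WeakDual ℂ B) (hq : ∀ s, q s ∈ stSet B)
    (b : B) : Pm Dg q hq b = Dg (evq q hq b) := rfl

/-- diagonal-positive unital functionals. -/
def DPos (Dg : ℓ^∞(T, ℂ) →⋆ₐ[ℂ] C) (ω : C →L[ℂ] ℂ) : Prop :=
  ω 1 = 1 ∧ ∀ f : ℓ^∞(T, ℂ), (∀ s, 0 ≤ f s) → 0 ≤ ω (Dg f)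

theorem IsSt.dpos (Dg : ℓ^∞(T, ℂ) →⋆ₐ[ℂ] C) {ω : C →L[ℂ] ℂ} (h : IsSt ω) : DPos Dg ω :=
  ⟨h.1, fun _ hf => h.nonneg (Dg_pos Dg hf)⟩

theorem inf_const_apply (c : ℂ) (s : T) : (c • (1 : ℓ^∞(T, ℂ))) s = c := by
  have : (c • (1 : ℓ^∞(T, ℂ))) s = c • (1 : ℂ) := rfl
  simp [this]

theorem DPos.mono {Dg : ℓ^∞(T, ℂ) →⋆ₐ[ℂ] C} {ω : C →L[ℂ] ℂ} (h : DPos Dg ω)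
    {f : ℓ^∞(T, ℂ)} {u : ℂ} (hf : ∀ s, f s ≤ u) : ω (Dg f) ≤ u := by
  have := h.2 (u • 1 - f) (fun s => by
    have : (u • (1 : ℓ^∞(T, ℂ)) - f) s = (u • (1 : ℓ^∞(T, ℂ))) s - f s := rfl
    rw [this, inf_const_apply]; exact sub_nonneg.2 (hf s))
  rw [map_sub, map_smul, map_one, map_sub, map_smul, h.1] at this
  simpa using this

theorem DPos.im {Dg : ℓ^∞(T, ℂ) →⋆ₐ[ℂ] C} {ω : C →L[ℂ] ℂ} (h : DPos Dg ω)
    {f : ℓ^∞(T, ℂ)} (hf : ∀ s, (f s).im = 0) : (ω (Dg f)).im = 0 := by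
  have := h.mono (f := f) (u := (‖f‖ : ℂ)) (fun s => by
    rw [Complex.le_def]
    exact ⟨by simpa using (Complex.re_le_norm _).trans (inf_bd f s), by simp [hf s]⟩)
  simpa using (Complex.le_def.1 this).2

/-- real part in `ℓ^∞`. -/
def reI (f : ℓ^∞(T, ℂ)) : ℓ^∞(T, ℂ) := mkInf (fun s => ((f s).re : ℂ)) ‖f‖ (fun s => by
  rw [Complex.norm_real]; exact (Complex.abs_re_le_norm _).trans (inf_bd f s))

/-- imaginary part in `ℓ^∞`. -/
def imI (f : ℓ^∞(T, ℂ)) : ℓ^∞(T, ℂ) := mkInf (fun s => ((f s).im : ℂ)) ‖f‖ (fun s => by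
  rw [Complex.norm_real]; exact (Complex.abs_im_le_norm _).trans (inf_bd f s))

theorem reI_imI (f : ℓ^∞(T, ℂ)) : f = reI f + Complex.I • imI f := by
  ext s
  change f s = ((f s).re : ℂ) + Complex.I * ((f s).im : ℂ)
  rw [mul_comm]; exact (Complex.re_add_im _).symm

theorem DPos.re {Dg : ℓ^∞(T, ℂ) →⋆ₐ[ℂ] C} {ω : C →L[ℂ] ℂ} (h : DPos Dg ω)
    (f : ℓ^∞(T, ℂ)) : (ω (Dg f)).re = (ω (Dg (reI f))).re := by
  conv_lhs => rw [reI_imI f]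
  have h1 : (ω (Dg (imI f))).im = 0 := h.im (fun s => by simp [imI, mkInf_apply])
  rw [map_add, map_smul, map_add, map_smul]
  simp [h1]

theorem bar_mem {Dg : ℓ^∞(T, ℂ) →⋆ₐ[ℂ] C} {ω : C →L[ℂ] ℂ} (h : DPos Dg ω)
    {Q : Set (WeakDual ℂ B)} (hc : Convex ℝ Q) (hcl : IsClosed Q)
    {q : T → WeakDual ℂ B} (hq : ∀ s, q s ∈ stSet B) (hqQ : ∀ s, q s ∈ Q) :
    StrongDual.toWeakDual (ω.comp (Pm Dg q hq)) ∈ Q := by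
  by_contra hne
  obtain ⟨b, u, h1, h2⟩ := wd_separation hc hcl hne
  have h3 : (ω (Dg (evq q hq b))).re ≤ u := by
    rw [h.re]
    have := h.mono (f := reI (evq q hq b)) (u := (u : ℂ)) (fun s => by
      change (((q s b).re : ℝ) : ℂ) ≤ (u : ℂ)
      exact_mod_cast (h1 _ (hqQ s)).le)
    simpa using (Complex.le_def.1 this).1
  exact absurd h2 (not_lt.2 h3)

theorem mult_small {Dg : ℓ^∞(T, ℂ) →⋆ₐ[ℂ] C} {ω : C →L[ℂ] ℂ} (h : DPos Dg ω)
    {Q : Set (WeakDual ℂ B)} (hc : Convex ℝ Q) (hcl : IsClosed Q)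
    {q : T → WeakDual ℂ B} (hq : ∀ s, q s ∈ stSet B) (hqQ : ∀ s, q s ∈ Q)
    {y : WeakDual ℂ B} (hy : y ∈ Q.extremePoints ℝ) (hωy : ∀ b, ω (Pm Dg q hq b) = y b)
    (f : ℓ^∞(T, ℂ)) (hf : ∀ s, (f s).im = 0) (hf2 : ∀ s, |(f s).re| ≤ 1 / 2) (b : B) :
    ω (Dg f * Pm Dg q hq b) = ω (Dg f) * y b := by
  have key : ∀ f : ℓ^∞(T, ℂ), (∀ s, (f s).im = 0) → (∀ s, |(f s).re| ≤ 1 / 2) →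
      ∃ c : ℝ, ω (Dg f) = c ∧ |c| ≤ 1 / 2 ∧ ∃ ψ ∈ Q, ∀ b,
        (1 + c : ℝ) * ψ b = ω (Dg (1 + f) * Pm Dg q hq b) := by
    intro f hf hf2
    have e1 : ω (Dg f) = ((ω (Dg f)).re : ℂ) := by
      apply Complex.ext <;> simp [h.im hf]
    have b1 : (ω (Dg f)).re ≤ 1 / 2 := by
      have := h.mono (f := f) (u := ((1 / 2 : ℝ) : ℂ)) (fun s => by
        rw [Complex.le_def]
        refine ⟨?_, by rw [hf s, Complex.ofReal_im]⟩
        rw [Complex.ofReal_re]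
        exact (le_abs_self _).trans (hf2 s))
      have h0 := (Complex.le_def.1 this).1
      rwa [Complex.ofReal_re] at h0
    have b2 : -(1 / 2) ≤ (ω (Dg f)).re := by
      have := h.mono (f := -f) (u := ((1 / 2 : ℝ) : ℂ)) (fun s => by
        rw [Complex.le_def]
        have e : (-f) s = - f s := rfl
        rw [e]
        refine ⟨?_, by rw [Complex.neg_im, hf s, Complex.ofReal_im, neg_zero]⟩
        rw [Complex.ofReal_re, Complex.neg_re]
        exact (neg_le_abs _).trans (hf2 s))
      have h0 := (Complex.le_def.1 this).1
      rw [map_neg, map_neg, Complex.ofReal_re, Complex.neg_re] at h0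
      linarith
    set c : ℝ := (ω (Dg f)).re
    have hc0 : (1 + c : ℝ) ≠ 0 := by linarith
    have hc0' : ((1 + c : ℝ) : ℂ) ≠ 0 := by exact_mod_cast hc0
    let ω' : C →L[ℂ] ℂ := ((1 + c : ℝ) : ℂ)⁻¹ • (ω.comp (ContinuousLinearMap.mul ℂ C (Dg (1 + f))))
    have hω' : ∀ x, ω' x = ((1 + c : ℝ) : ℂ)⁻¹ * ω (Dg (1 + f) * x) := fun x => rfl
    have hD : DPos Dg ω' := by
      refine ⟨?_, fun k hk => ?_⟩
      · rw [hω', mul_one, map_add, map_one, map_add, h.1, e1]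
        push_cast at hc0' ⊢
        exact inv_mul_cancel₀ hc0'
      · rw [hω', ← map_mul, ← Complex.ofReal_inv]
        refine mul_nonneg ?_ (h.2 _ fun s => ?_)
        · rw [Complex.zero_le_real]; apply inv_nonneg.2; linarith
        · have : ((1 + f) * k) s = (1 + f s) * k s := rfl
          rw [this]
          refine mul_nonneg ?_ (hk s)
          rw [Complex.le_def]
          have := neg_abs_le (f s).re
          have := hf2 s
          simp [hf s]
          linarith
    refine ⟨c, e1, abs_le.2 ⟨b2, b1⟩, _, bar_mem hD hc hcl hq hqQ, fun b => ?_⟩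
    change _ * ω' (Pm Dg q hq b) = _
    rw [hω', ← mul_assoc, mul_inv_cancel₀ hc0', one_mul]
  obtain ⟨c, hc1, hc2, ψ, hψ, hψe⟩ := key f hf hf2
  obtain ⟨c', hc1', hc2', ψ', hψ', hψe'⟩ := key (-f) (fun s => by
    change (-(f s)).im = 0; simp [hf s]) (fun s => by change |(-(f s)).re| ≤ _; simpa using hf2 s)
  have hcc : c' = -c := by
    rw [map_neg, map_neg, hc1] at hc1'
    exact_mod_cast hc1'.symm
  have hcl1 := abs_le.1 hc2
  rw [mem_extremePoints] at hy
  have := hy.2 ψ hψ ψ' hψ' ⟨(1 + c) / 2, (1 - c) / 2, by linarith, by linarith, by ring, by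
    apply DFunLike.ext
    intro x
    change ((1 + c) / 2) • ψ x + ((1 - c) / 2) • ψ' x = y x
    have e1 := hψe x
    have e2 := hψe' x
    rw [hcc] at e2
    rw [← hωy x]
    rw [map_add, map_one, add_mul, one_mul, map_add] at e1 e2
    rw [map_neg, neg_mul, map_neg] at e2
    rw [Complex.real_smul, Complex.real_smul]
    push_cast at e1 e2 ⊢
    linear_combination (1/2) * e1 + (1/2) * e2⟩
  have e1 := hψe b
  rw [this.1, map_add, map_one, add_mul, one_mul, map_add, hωy b] at e1
  rw [hc1]
  push_cast at e1
  linear_combination -e1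

theorem mult_all {Dg : ℓ^∞(T, ℂ) →⋆ₐ[ℂ] C} {ω : C →L[ℂ] ℂ} (h : DPos Dg ω)
    {Q : Set (WeakDual ℂ B)} (hc : Convex ℝ Q) (hcl : IsClosed Q)
    {q : T → WeakDual ℂ B} (hq : ∀ s, q s ∈ stSet B) (hqQ : ∀ s, q s ∈ Q)
    {y : WeakDual ℂ B} (hy : y ∈ Q.extremePoints ℝ) (hωy : ∀ b, ω (Pm Dg q hq b) = y b)
    (f : ℓ^∞(T, ℂ)) (b : B) :
    ω (Dg f * Pm Dg q hq b) = ω (Dg f) * y b := by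
  have real : ∀ f : ℓ^∞(T, ℂ), (∀ s, (f s).im = 0) →
      ω (Dg f * Pm Dg q hq b) = ω (Dg f) * y b := by
    intro f hf
    have hr : 0 < 2 * ‖f‖ + 2 := by positivity
    set r : ℝ := (2 * ‖f‖ + 2) with hrdef
    have hv : ∀ s, ((((r⁻¹ : ℝ) : ℂ)) • f) s = ((r⁻¹ : ℝ) : ℂ) * f s := fun s => rfl
    have := mult_small h hc hcl hq hqQ hy hωy ((((r⁻¹ : ℝ) : ℂ)) • f)
      (fun s => by rw [hv, Complex.im_ofReal_mul, hf s, mul_zero]) (fun s => by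
        rw [hv, Complex.re_ofReal_mul, abs_mul, abs_of_pos (inv_pos.2 hr), inv_mul_le_iff₀ hr]
        have := (Complex.abs_re_le_norm _).trans (inf_bd f s)
        linarith) b
    have hne : ((r⁻¹ : ℝ) : ℂ) ≠ 0 := by exact_mod_cast (inv_pos.2 hr).ne'
    rw [map_smul, smul_mul_assoc, map_smul, map_smul, smul_eq_mul, smul_eq_mul, mul_assoc] at this
    exact mul_left_cancel₀ hne this
  rw [reI_imI f, map_add, map_smul, add_mul, smul_mul_assoc, map_add, map_smul,
    real (reI f) (fun s => by simp [reI, mkInf_apply]),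
    real (imI f) (fun s => by simp [imI, mkInf_apply]), map_add, map_smul]
  simp only [smul_eq_mul]; ring

theorem core_exists [MulAction G T] {Dg : ℓ^∞(T, ℂ) →⋆ₐ[ℂ] C} {V : G →* unitary C}
    (cov : ∀ (g : G) (f f' : ℓ^∞(T, ℂ)), (∀ s, f' s = f (g⁻¹ • s)) →
      (V g : C) * Dg f * (V g⁻¹ : C) = Dg f')
    {S : Set (WeakDual ℂ C)} (hS : Good V S)
    {U : G →* unitary B} {Q : Set (WeakDual ℂ B)} (hQ : Good U Q)
    (hmin : ∀ Q', Good U Q' → Q' ⊆ Q → Q' = Q)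
    {q : T → WeakDual ℂ B} (hq : ∀ s, q s ∈ stSet B) (hqQ : ∀ s, q s ∈ Q)
    (heq : ∀ (g : G) s, q (g • s) = act U g (q s))
    {y : WeakDual ℂ B} (hy : y ∈ Q.extremePoints ℝ) :
    ∃ ω ∈ S, (∀ b, ω (Pm Dg q hq b) = y b) ∧
      (∀ f b, ω (Dg f * Pm Dg q hq b) = ω (Dg f) * y b) ∧
      (∀ x b, ω (x * Pm Dg q hq b) = ω x * y b) ∧
      (∀ x b, ω (Pm Dg q hq b * x) = ω x * y b) := by
  let Φ : WeakDual ℂ C → WeakDual ℂ B :=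
    fun ω => StrongDual.toWeakDual ((WeakDual.toStrongDual ω).comp (Pm Dg q hq))
  have hΦ : ∀ ω b, Φ ω b = ω (Pm Dg q hq b) := fun _ _ => rfl
  have hΦc : Continuous Φ :=
    WeakDual.continuous_of_continuous_eval fun b => wd_eval_continuous (Pm Dg q hq b)
  have hPeq : ∀ g b, cj V g (Pm Dg q hq b) = Pm Dg q hq (cj U g b) := by
    intro g b
    rw [cj_apply, Pm_apply, Pm_apply]
    apply cov
    intro s
    rw [evq_apply, evq_apply, heq, act_apply, inv_inv]
  have hsub : Φ '' S ⊆ Q := by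
    rintro _ ⟨ω, hω, rfl⟩
    exact bar_mem ((stSet_isSt (hS.sub hω)).dpos Dg) hQ.conv hQ.closed hq hqQ
  have hgood : Good U (Φ '' S) := by
    refine ⟨hsub.trans hQ.sub, (hS.compact.image hΦc).isClosed, ?_, ?_, hS.ne.image _⟩
    · rintro _ ⟨ω, hω, rfl⟩ _ ⟨ω', hω', rfl⟩ a b ha hb hab
      exact ⟨a • ω + b • ω', hS.conv hω hω' ha hb hab, rfl⟩
    · rintro g _ ⟨ω, hω, rfl⟩
      refine ⟨act V g ω, hS.inv g ω hω, ?_⟩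
      apply DFunLike.ext
      intro b
      rw [hΦ, act_apply, act_apply, hΦ, hPeq]
  have hyS : y ∈ Φ '' S := by rw [hmin _ hgood hsub]; exact hy.1
  obtain ⟨ω, hω, hωy⟩ := hyS
  have hst := stSet_isSt (hS.sub hω)
  have h1 : ∀ b, (WeakDual.toStrongDual ω) (Pm Dg q hq b) = y b := fun b => by rw [← hωy]; rfl
  have h2 := mult_all (hst.dpos Dg) hQ.conv hQ.closed hq hqQ hy h1
  have h3 : ∀ b, (WeakDual.toStrongDual ω)
      (star (Dg (evq q hq b - y b • 1)) * Dg (evq q hq b - y b • 1)) = 0 := by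
    intro b
    rw [← map_star]
    conv_lhs => rw [map_sub Dg (evq q hq b), ← Pm_apply, mul_sub, map_sub, h2, map_smul, map_one,
      mul_smul_comm, mul_one, map_smul, smul_eq_mul]
    ring
  have h4 : ∀ b, Pm Dg q hq b = Dg (evq q hq b - y b • 1) + y b • 1 := by
    intro b; rw [map_sub, map_smul, map_one, Pm_apply]; abel
  refine ⟨ω, hω, h1, h2, fun x b => ?_, fun x b => ?_⟩
  · change (WeakDual.toStrongDual ω) _ = (WeakDual.toStrongDual ω) x * _
    rw [h4, mul_add, map_add, hst.cs (h3 b), mul_smul_comm, mul_one, map_smul, zero_add,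
      smul_eq_mul, mul_comm]
  · change (WeakDual.toStrongDual ω) _ = (WeakDual.toStrongDual ω) x * _
    rw [h4, add_mul, map_add, hst.cs' (x := Dg (evq q hq b - y b • 1)), smul_mul_assoc, one_mul,
      map_smul, zero_add, smul_eq_mul, mul_comm]
    rw [← map_star, ← map_mul, mul_comm, map_mul, map_star]
    exact h3 b
end core

section P4
variable {T : Type u}

/-- bounded operators on `ℓ²(T)`. -/
abbrev BH (T : Type u) := ℓ²(T, ℂ) →L[ℂ] ℓ²(T, ℂ)

theorem perm_mem [MulAction G T] (g : G) (f : ℓ²(T, ℂ)) : Memℓp (fun h => f (g⁻¹ • h)) 2 := by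
  have hf : Summable fun i : T => ‖f i‖ ^ (2 : ℝ≥0∞).toReal :=
    (memℓp_gen_iff (by norm_num)).1 (lp.memℓp f)
  exact memℓp_gen ((MulAction.toPerm g⁻¹).summable_iff.2 hf)

/-- permutation unitary. -/
def permE [MulAction G T] (g : G) : ℓ²(T, ℂ) ≃ₗᵢ[ℂ] ℓ²(T, ℂ) :=
{ toFun := fun f => ⟨fun h => f (g⁻¹ • h), perm_mem g f⟩
  invFun := fun f => ⟨fun h => f (g • h), by
    have := perm_mem g⁻¹ f; simp only [inv_inv] at this; exact this⟩
  map_add' := by intro f₁ f₂; ext h; simp [lp.coeFn_add]; rfl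
  map_smul' := by intro c f; ext h; simp [lp.coeFn_smul]
  left_inv := by intro f; ext h; simp
  right_inv := by intro f; ext h; simp
  norm_map' := by
    intro f
    rw [lp.norm_eq_tsum_rpow (by norm_num) f, lp.norm_eq_tsum_rpow (by norm_num)]
    congr 1
    exact (MulAction.toPerm g⁻¹).tsum_eq (fun h => ‖f h‖ ^ (2 : ℝ≥0∞).toReal) }

theorem permE_apply [MulAction G T] (g : G) (f : ℓ²(T, ℂ)) (s : T) :
    permE g f s = f (g⁻¹ • s) := rfl

theorem lregE_apply (g : G) (f : ℓ²(G, ℂ)) (s : G) : lregE g f s = f (g⁻¹ * s) := by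
  unfold lregE; rfl

/-- the permutation representation. -/
def perm (G : Type u) [Group G] (T : Type u) [MulAction G T] : G →* unitary (BH T) where
  toFun g := Unitary.linearIsometryEquiv.symm (permE g)
  map_one' := by
    rw [MulEquiv.symm_apply_eq, map_one]
    apply LinearIsometryEquiv.ext; intro f; ext s
    rw [permE_apply]; simp
  map_mul' g h := by
    rw [MulEquiv.symm_apply_eq, map_mul, MulEquiv.apply_symm_apply, MulEquiv.apply_symm_apply]
    apply LinearIsometryEquiv.ext; intro f; ext s
    change f ((g * h)⁻¹ • s) = f (h⁻¹ • g⁻¹ • s)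
    rw [mul_inv_rev, mul_smul]

theorem perm_apply [MulAction G T] (g : G) (f : ℓ²(T, ℂ)) (s : T) :
    (perm G T g : BH T) f s = f (g⁻¹ • s) := rfl

theorem perm_eq_lreg (g : G) : (perm G G g : BH G) = lreg g := by
  apply ContinuousLinearMap.ext; intro f; ext s
  rw [perm_apply]
  unfold lreg
  exact (lregE_apply g f s).symm

theorem mul_mem_l2 (f : ℓ^∞(T, ℂ)) (ξ : ℓ²(T, ℂ)) : Memℓp (fun s => f s * ξ s) 2 := by
  have hf : Summable fun i : T => ‖ξ i‖ ^ (2 : ℝ≥0∞).toReal :=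
    (memℓp_gen_iff (by norm_num)).1 (lp.memℓp ξ)
  refine memℓp_gen (Summable.of_nonneg_of_le (fun i => by positivity) (fun i => ?_)
    (hf.mul_left (‖f‖ ^ (2 : ℝ≥0∞).toReal)))
  rw [norm_mul, Real.mul_rpow (norm_nonneg _) (norm_nonneg _)]
  gcongr
  exact inf_bd f i

/-- multiplication operator. -/
def mulOp (f : ℓ^∞(T, ℂ)) : BH T :=
  LinearMap.mkContinuous
    { toFun := fun ξ => (⟨fun s => f s * ξ s, mul_mem_l2 f ξ⟩ : ℓ²(T, ℂ))
      map_add' := by intro a b; ext s; simp [mul_add]; rfl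
      map_smul' := by intro c a; ext s; simp; ring } ‖f‖ (by
    intro ξ
    have h2 : (0:ℝ) < (2 : ℝ≥0∞).toReal := by norm_num
    have hf : Summable fun i : T => ‖ξ i‖ ^ (2 : ℝ≥0∞).toReal :=
      (memℓp_gen_iff (by norm_num)).1 (lp.memℓp ξ)
    refine lp.norm_le_of_tsum_le h2 (by positivity) ?_
    rw [Real.mul_rpow (norm_nonneg _) (norm_nonneg _), lp.norm_rpow_eq_tsum h2, ← tsum_mul_left]
    have hle : ∀ i, ‖f i * ξ i‖ ^ (2 : ℝ≥0∞).toReal ≤ ‖f‖ ^ (2 : ℝ≥0∞).toReal * ‖ξ i‖ ^ (2 : ℝ≥0∞).toReal := by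
      intro i
      rw [norm_mul, Real.mul_rpow (norm_nonneg _) (norm_nonneg _)]
      gcongr
      exact inf_bd f i
    exact Summable.tsum_le_tsum hle (Summable.of_nonneg_of_le (fun i => by positivity) hle
      (hf.mul_left _)) (hf.mul_left _))

theorem mulOp_apply (f : ℓ^∞(T, ℂ)) (ξ : ℓ²(T, ℂ)) (s : T) : mulOp f ξ s = f s * ξ s := rfl

/-- multiplication operators as a star algebra homomorphism. -/
def Dg (T : Type u) : ℓ^∞(T, ℂ) →⋆ₐ[ℂ] BH T where
  toFun := mulOp
  map_one' := by
    apply ContinuousLinearMap.ext; intro ξ; ext s; rw [mulOp_apply]; simp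
  map_mul' f g := by
    apply ContinuousLinearMap.ext; intro ξ; ext s
    rw [mulOp_apply, mul_apply_eq_comp, mulOp_apply, mulOp_apply, lp.infty_coeFn_mul,
      Pi.mul_apply, mul_assoc]
  map_zero' := by
    apply ContinuousLinearMap.ext; intro ξ; ext s; rw [mulOp_apply]; simp
  map_add' f g := by
    apply ContinuousLinearMap.ext; intro ξ; ext s
    rw [mulOp_apply, add_apply, lp.coeFn_add, lp.coeFn_add,
      Pi.add_apply, Pi.add_apply, mulOp_apply, mulOp_apply, add_mul]
  commutes' c := by
    apply ContinuousLinearMap.ext; intro ξ; ext s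
    rw [mulOp_apply, Algebra.algebraMap_eq_smul_one, Algebra.algebraMap_eq_smul_one, inf_const_apply]
    simp
  map_star' f := by
    rw [ContinuousLinearMap.star_eq_adjoint, ContinuousLinearMap.eq_adjoint_iff]
    intro ξ η
    rw [lp.inner_eq_tsum, lp.inner_eq_tsum]
    congr 1; ext s
    rw [mulOp_apply, mulOp_apply, lp.coeFn_star, Pi.star_apply]
    simp; ring

theorem Dg_apply (f : ℓ^∞(T, ℂ)) (ξ : ℓ²(T, ℂ)) (s : T) : Dg T f ξ s = f s * ξ s := rfl

theorem Dg_cov [MulAction G T] (g : G) (f f' : ℓ^∞(T, ℂ)) (h : ∀ s, f' s = f (g⁻¹ • s)) :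
    (perm G T g : BH T) * Dg T f * (perm G T g⁻¹ : BH T) = Dg T f' := by
  apply ContinuousLinearMap.ext; intro ξ; ext s
  rw [mul_apply_eq_comp, mul_apply_eq_comp, perm_apply, Dg_apply,
    perm_apply, Dg_apply, h]
  simp

/-- basis vectors -/
def dl (s : T) : ℓ²(T, ℂ) := letI := Classical.decEq T; lp.single 2 s 1

theorem dl_norm (s : T) : ‖dl s‖ = 1 := by
  classical
  unfold dl; rw [lp.norm_single (by norm_num)]; simp

open Classical in
theorem dl_apply (s t : T) : dl s t = if t = s then 1 else 0 := by
  unfold dl; rw [lp.single_apply]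
  by_cases h : t = s <;> simp [h]

theorem dl_inner (s : T) (ξ : ℓ²(T, ℂ)) : inner ℂ (dl s) ξ = ξ s := by
  classical
  unfold dl; rw [lp.inner_single_left]; simp

theorem deltaOne_eq : deltaOne (G := G) = dl 1 := by
  unfold deltaOne dl; rfl

theorem perm_dl [MulAction G T] (g : G) (s : T) : (perm G T g : BH T) (dl s) = dl (g • s) := by
  ext t
  rw [perm_apply, dl_apply, dl_apply]
  by_cases h : t = g • s
  · rw [if_pos h, if_pos (by rw [h, inv_smul_smul])]
  · rw [if_neg h, if_neg (fun h' => h (inv_smul_eq_iff.1 h'))]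

theorem dl_dense : (Submodule.span ℂ (Set.range (dl (T := T)))).topologicalClosure = ⊤ := by
  rw [eq_top_iff]
  rintro ξ -
  classical
  have h := lp.hasSum_single (E := fun _ : T => ℂ) (p := 2) (by norm_num) ξ
  refine mem_closure_of_tendsto h (Filter.Eventually.of_forall fun F => ?_)
  refine Submodule.sum_mem _ fun s _ => ?_
  have : lp.single 2 s (ξ s) = (ξ s) • dl s := by
    ext t
    rw [lp.coeFn_smul, Pi.smul_apply, dl_apply, lp.single_apply]
    by_cases h : t = s
    · subst h; simp
    · simp [h]
  rw [this]
  exact Submodule.smul_mem _ _ (Submodule.subset_span ⟨s, rfl⟩)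

/-- vector functional. -/
def vf (ξ : ℓ²(T, ℂ)) : BH T →L[ℂ] ℂ :=
  (innerSL ℂ ξ).comp (ContinuousLinearMap.apply ℂ (ℓ²(T, ℂ)) ξ)

theorem vf_apply (ξ : ℓ²(T, ℂ)) (x : BH T) : vf ξ x = inner ℂ ξ (x ξ) := rfl

theorem vf_mem {ξ : ℓ²(T, ℂ)} (h : ‖ξ‖ = 1) : StrongDual.toWeakDual (vf ξ) ∈ stSet (BH T) := by
  refine ⟨?_, fun b => ?_⟩
  · change vf ξ 1 = 1
    rw [vf_apply, one_apply_eq_self, inner_self_eq_norm_sq_to_K, h]; simp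
  · change ‖vf ξ b‖ ≤ _
    rw [vf_apply]
    calc _ ≤ ‖ξ‖ * ‖b ξ‖ := norm_inner_le_norm _ _
      _ ≤ ‖ξ‖ * (‖b‖ * ‖ξ‖) := by gcongr; exact b.le_opNorm ξ
      _ = ‖b‖ := by rw [h]; ring

theorem good_stSet [Nonempty T] (U : G →* unitary (BH T)) : Good U (stSet (BH T)) where
  sub := subset_rfl
  closed := isClosed_stSet
  conv := convex_stSet
  inv g _ hφ := act_stSet U g hφ
  ne := ⟨_, vf_mem (dl_norm (Classical.arbitrary T))⟩

end P4

section P5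
variable {T : Type u}

theorem Pm_cov [MulAction G T] {B : Type*} [CStarAlgebra B] [PartialOrder B] [StarOrderedRing B]
    {U : G →* unitary B} {q : T → WeakDual ℂ B} (hq : ∀ s, q s ∈ stSet B)
    (heq : ∀ g s, q (g • s) = act U g (q s)) (t : G) (b : B) :
    (perm G T t : BH T) * Pm (Dg T) q hq b = Pm (Dg T) q hq (cj U t b) * (perm G T t : BH T) := by
  have h := Dg_cov t (evq q hq b) (evq q hq (cj U t b)) (fun s => by
    rw [evq_apply, evq_apply, heq, act_apply, inv_inv])
  rw [Pm_apply, Pm_apply, ← h, mul_assoc _ _ (perm G T t : BH T), U_inv_mul, mul_one]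

theorem case_one {S Q : Set (WeakDual ℂ (BH G))} (hS : Good (perm G G) S)
    (hQ : Good (perm G G) Q) (hmin : ∀ Q', Good (perm G G) Q' → Q' ⊆ Q → Q' = Q)
    {y : WeakDual ℂ (BH G)} (hy : y ∈ Q.extremePoints ℝ) :
    ∃ ω ∈ S, ∀ t : G, act (perm G G) t y ≠ y → ω (perm G G t : BH G) = 0 := by
  have hyQ : y ∈ Q := hy.1
  have hqQ : ∀ s : G, act (perm G G) s y ∈ Q := fun s => hQ.inv s y hyQ
  have hq : ∀ s : G, act (perm G G) s y ∈ stSet (BH G) := fun s => hQ.sub (hqQ s)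
  have heq : ∀ g s : G, act (perm G G) (g • s) y = act (perm G G) g (act (perm G G) s y) :=
    fun g s => act_mul _ _ _ _
  obtain ⟨ω, hω, -, -, h3, h4⟩ := core_exists (Dg := Dg G) Dg_cov hS hQ hmin hq hqQ heq hy
  refine ⟨ω, hω, fun t ht => ?_⟩
  by_contra h0
  apply ht
  rw [← act_act_inv (perm G G) t y]
  congr 1
  symm
  rw [act_act_inv]
  apply DFunLike.ext
  intro b
  have h5 := h3 (perm G G t : BH G) b
  rw [Pm_cov hq heq, h4] at h5
  rw [act_apply, inv_inv]
  exact mul_left_cancel₀ h0 h5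
end P5

section P6

theorem exists_r (H : Subgroup G) : ∃ r : G → G, (∀ g, r g ∈ H) ∧ ∀ h ∈ H, ∀ g, r (h * g) = h * r g := by
  refine ⟨fun g => g * (QuotientGroup.mk (s := H) g⁻¹).out, fun g => ?_, fun h hh g => ?_⟩
  · obtain ⟨k, hk⟩ := QuotientGroup.mk_out_eq_mul H g⁻¹
    beta_reduce
    rw [hk]; simp
  · have : (QuotientGroup.mk (s := H) (h * g)⁻¹) = QuotientGroup.mk (s := H) g⁻¹ := by
      rw [QuotientGroup.eq]; simpa using hh
    simp only [this, mul_assoc]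

open Classical in
/-- basis vector of ell one. -/
def d1 (s : G) : lp (fun _ : G => ℝ) 1 := lp.single 1 s 1

open Classical in
theorem d1_apply (s t : G) : d1 s t = if t = s then 1 else 0 := by
  unfold d1; rw [lp.single_apply]
  by_cases h : t = s <;> simp [h]

theorem d1_norm (s : G) : ‖d1 s‖ = 1 := by
  classical
  unfold d1; rw [lp.norm_single (by norm_num)]; simp

theorem day {H : Subgroup G} {y : WeakDual ℂ (BH G)} (hy : y ∈ stSet (BH G))
    (hinv : ∀ h ∈ H, ∀ b, y (cj (perm G G) h b) = y b) (E : Finset G) (hE : ∀ h ∈ E, h ∈ H)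
    {ε : ℝ} (hε : 0 < ε) :
    ∃ c ∈ convexHull ℝ ((fun k : G => (fun h : E => d1 (h * k) - d1 k)) '' H), ‖c‖ < ε := by
  classical
  set v : G → (E → lp (fun _ : G => ℝ) 1) := fun k => (fun h : E => d1 (h * k) - d1 k) with hv
  by_contra hcon
  push Not at hcon
  have h0 : (0 : E → lp (fun _ : G => ℝ) 1) ∉ closure (convexHull ℝ (v '' H)) := by
    intro h
    rw [Metric.mem_closure_iff] at h
    obtain ⟨b, hb, hb'⟩ := h ε hε
    rw [dist_zero_left] at hb'
    exact absurd hb' (not_lt.2 (hcon b hb))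
  obtain ⟨f, u, hu, hf⟩ := geometric_hahn_banach_point_closed
    ((convex_convexHull ℝ (v '' H)).closure) isClosed_closure h0
  rw [map_zero] at hu
  let φ : E → G → ℝ := fun h k => f (Pi.single h (d1 k))
  have hφ : ∀ h k, ‖φ h k‖ ≤ ‖f‖ := fun h k => by
    refine (f.le_opNorm _).trans ?_
    have : ‖(Pi.single h (d1 k) : E → lp (fun _ : G => ℝ) 1)‖ ≤ 1 := by
      rw [Pi.norm_single, d1_norm]
    exact mul_le_of_le_one_right (norm_nonneg _) this
  have hfv : ∀ k, f (v k) = ∑ h : E, (φ h (h * k) - φ h k) := by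
    intro k
    have : v k = ∑ h : E, (Pi.single h (d1 (h * k)) - Pi.single h (d1 k)) := by
      simp_rw [← Pi.single_sub]
      exact (Finset.univ_sum_single (v k)).symm
    rw [this, map_sum]
    simp_rw [map_sub]; rfl
  obtain ⟨r, hr, hr'⟩ := exists_r H
  let ψ : E → ℓ^∞(G, ℂ) := fun h => mkInf (fun g => ((φ h (r g) : ℝ) : ℂ)) ‖f‖ (fun g => by
    rw [Complex.norm_real]; exact hφ _ _)
  let ψ' : E → ℓ^∞(G, ℂ) := fun h => mkInf (fun g => ((φ h (h * r g) : ℝ) : ℂ)) ‖f‖ (fun g => by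
    rw [Complex.norm_real]; exact hφ _ _)
  have h1 : ∀ h : E, y (Dg G (ψ' h)) = y (Dg G (ψ h)) := by
    intro h
    have hc := Dg_cov (T := G) (h : G)⁻¹ (ψ h) (ψ' h) (fun s => by
      simp only [ψ, ψ', mkInf_apply, inv_inv, smul_eq_mul]
      rw [hr' h (hE h h.2)])
    rw [← hc, ← cj_apply, hinv _ (H.inv_mem (hE h h.2))]
  let F : ℓ^∞(G, ℂ) := ∑ h : E, (ψ' h - ψ h) - (u : ℂ) • 1
  have h2 : y (Dg G F) = - (u : ℂ) := by
    simp only [F]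
    rw [map_sub, map_sub, map_sum, map_sum, map_smul, map_smul, map_one, hy.1]
    rw [Finset.sum_eq_zero (fun h _ => by rw [map_sub, map_sub, h1, sub_self])]
    simp
  have h3 : 0 ≤ y (Dg G F) := (stSet_isSt hy).nonneg (Dg_pos _ (fun s => by
    have hs := hf (v (r s)) (subset_closure (subset_convexHull ℝ _ ⟨_, hr s, rfl⟩))
    rw [hfv] at hs
    have : F s = ((∑ h : E, (φ h (h * r s) - φ h (r s)) - u : ℝ) : ℂ) := by
      simp only [F]
      rw [lp.coeFn_sub, Pi.sub_apply, inf_const_apply, lp.coeFn_sum, Finset.sum_apply]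
      push_cast
      rfl
    rw [this, Complex.zero_le_real]
    linarith))
  rw [h2, ← Complex.ofReal_neg, Complex.zero_le_real] at h3
  linarith

theorem day' {H : Subgroup G} (E : Finset G) {c : E → lp (fun _ : G => ℝ) 1}
    (hc : c ∈ convexHull ℝ ((fun k : G => (fun h : E => d1 (h * k) - d1 k)) '' H)) :
    ∃ p : G →₀ ℝ, (∀ s, 0 ≤ p s) ∧ (∀ s ∉ H, p s = 0) ∧ (p.sum fun _ x => x) = 1 ∧
      ∀ (h : E) s, c h s = p ((h : G)⁻¹ * s) - p s := by
  classical
  have : convexHull ℝ ((fun k : G => (fun h : E => d1 (h * k) - d1 k)) '' (H : Set G)) ⊆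
    {c | ∃ p : G →₀ ℝ, (∀ s, 0 ≤ p s) ∧ (∀ s ∉ H, p s = 0) ∧ (p.sum fun _ x => x) = 1 ∧
      ∀ (h : E) s, c h s = p ((h : G)⁻¹ * s) - p s} := by
    refine convexHull_min ?_ ?_
    · rintro _ ⟨k, hk, rfl⟩
      refine ⟨Finsupp.single k 1, fun s => ?_, fun s hs => ?_, ?_, fun h s => ?_⟩
      · rw [Finsupp.single_apply]; split_ifs <;> norm_num
      · rw [Finsupp.single_apply, if_neg]; rintro rfl; exact hs hk
      · simp
      · simp only [lp.coeFn_sub, Pi.sub_apply, d1_apply, Finsupp.single_apply]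
        congr 1
        · simp only [eq_inv_mul_iff_mul_eq, eq_comm]
        · simp only [eq_comm]
    · rintro c ⟨p, h1, h2, h3, h4⟩ c' ⟨p', h1', h2', h3', h4'⟩ a b ha hb hab
      refine ⟨a • p + b • p', fun s => ?_, fun s hs => ?_, ?_, fun h s => ?_⟩
      · simp only [Finsupp.add_apply, Finsupp.smul_apply, smul_eq_mul]
        have := h1 s; have := h1' s; positivity
      · simp [h2 s hs, h2' s hs]
      · rw [Finsupp.sum_add_index' (by simp) (by simp), Finsupp.sum_smul_index (by simp),
          Finsupp.sum_smul_index (by simp), ← Finsupp.mul_sum, ← Finsupp.mul_sum, h3, h3']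
        simpa using hab
      · simp only [Pi.add_apply, Pi.smul_apply, lp.coeFn_add, lp.coeFn_smul, h4, h4',
          Finsupp.add_apply, Finsupp.smul_apply, smul_eq_mul]
        ring
  exact this hc

end P6

section P7

theorem sqrt_sub_sq {a b : ℝ} (ha : 0 ≤ a) (hb : 0 ≤ b) : (√a - √b) ^ 2 ≤ |a - b| := by
  have h1 : a - b = (√a - √b) * (√a + √b) := by
    have := Real.mul_self_sqrt ha; have := Real.mul_self_sqrt hb; nlinarith
  rw [h1, abs_mul, ← sq_abs, sq]
  refine mul_le_mul_of_nonneg_left ?_ (abs_nonneg _)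
  rw [abs_of_nonneg (by positivity : 0 ≤ √a + √b), abs_le]
  have := Real.sqrt_nonneg a; have := Real.sqrt_nonneg b
  constructor <;> linarith

theorem almost_inv {H : Subgroup G} {y : WeakDual ℂ (BH G)} (hy : y ∈ stSet (BH G))
    (hinv : ∀ h ∈ H, ∀ b, y (cj (perm G G) h b) = y b) (E : Finset G) (hE : ∀ h ∈ E, h ∈ H)
    {ε : ℝ} (hε : 0 < ε) :
    ∃ ξ : ℓ²(G, ℂ), ‖ξ‖ = 1 ∧ (∀ g ∉ H, vf ξ (perm G G g : BH G) = 0) ∧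
      ∀ h ∈ E, ‖vf ξ (perm G G h : BH G) - 1‖ ≤ ε := by
  obtain ⟨c, hc, hcε⟩ := day hy hinv E hE (ε := ε ^ 2) (by positivity)
  obtain ⟨p, p0, pH, psum, pc⟩ := day' E hc
  have hr2 : (2 : ℝ≥0∞).toReal = ((2 : ℕ) : ℝ) := by norm_num
  have hmem : Memℓp (fun s => ((√(p s) : ℝ) : ℂ)) 2 := by
    refine memℓp_gen (summable_of_hasFiniteSupport ?_)
    refine p.support.finite_toSet.subset fun s hs => ?_
    by_contra h
    simp only [Finset.mem_coe, Finsupp.mem_support_iff, not_not] at h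
    simp [h] at hs
  let ξ : ℓ²(G, ℂ) := ⟨_, hmem⟩
  have hξ : ∀ s, ξ s = ((√(p s) : ℝ) : ℂ) := fun _ => rfl
  have hn : ‖ξ‖ ^ 2 = 1 := by
    have := lp.norm_rpow_eq_tsum (p := 2) (by norm_num) ξ
    rw [hr2, Real.rpow_natCast] at this
    rw [this, ← psum, Finsupp.sum, tsum_eq_sum (s := p.support)]
    · refine Finset.sum_congr rfl fun s _ => ?_
      rw [Real.rpow_natCast, hξ, Complex.norm_real, Real.norm_eq_abs, sq_abs, Real.sq_sqrt (p0 s)]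
    · intro s hs
      simp only [Finsupp.mem_support_iff, not_not] at hs
      rw [hξ, hs]; simp
  have hn1 : ‖ξ‖ = 1 := by
    have := norm_nonneg ξ; nlinarith
  refine ⟨ξ, hn1, fun g hg => ?_, fun h hh => ?_⟩
  · rw [vf_apply, lp.inner_eq_tsum]
    refine (tsum_congr fun s => ?_).trans tsum_zero
    rw [perm_apply, hξ, hξ]
    by_cases hs : s ∈ H
    · have : (g⁻¹ • s) ∉ H := by
        intro h'
        apply hg
        have := H.mul_mem hs (H.inv_mem h')
        simpa using this
      rw [pH _ this]; simp
    · rw [pH _ hs]; simp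
  · have e1 : vf ξ (perm G G h : BH G) - 1 = inner ℂ ξ ((perm G G h : BH G) ξ - ξ) := by
      rw [inner_sub_right, vf_apply, inner_self_eq_norm_sq_to_K, hn1]; simp
    rw [e1]
    refine (norm_inner_le_norm _ _).trans ?_
    rw [hn1, one_mul]
    refine le_of_sq_le_sq ?_ hε.le
    refine le_trans ?_ ((norm_le_pi_norm c ⟨h, hh⟩).trans hcε.le)
    have e2 := lp.norm_rpow_eq_tsum (p := 2) (by norm_num) ((perm G G h : BH G) ξ - ξ)
    have e3 := lp.norm_rpow_eq_tsum (p := 1) (by norm_num) (c ⟨h, hh⟩)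
    have hs2 := (memℓp_gen_iff (p := 2) (by norm_num)).1 (lp.memℓp ((perm G G h : BH G) ξ - ξ))
    have hs3 := (memℓp_gen_iff (p := 1) (by norm_num)).1 (lp.memℓp (c ⟨h, hh⟩))
    simp only [hr2, ENNReal.toReal_one, Real.rpow_one, Real.rpow_natCast] at e2 e3 hs2 hs3
    rw [e2, e3]
    refine Summable.tsum_le_tsum (fun s => ?_) hs2 hs3
    rw [pc, lp.coeFn_sub, Pi.sub_apply, perm_apply, hξ, hξ, ← Complex.ofReal_sub, Complex.norm_real,
      Real.norm_eq_abs, Real.norm_eq_abs, sq_abs]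
    exact sqrt_sub_sq (p0 _) (p0 _)

open Classical in
theorem exists_state_H {H : Subgroup G} {y : WeakDual ℂ (BH G)} (hy : y ∈ stSet (BH G))
    (hinv : ∀ h ∈ H, ∀ b, y (cj (perm G G) h b) = y b) :
    ∃ ω ∈ stSet (BH G), ∀ g, ω (perm G G g : BH G) = if g ∈ H then 1 else 0 := by
  let t : G × ℕ → Set (WeakDual ℂ (BH G)) := fun i =>
    {ω | ‖ω (perm G G i.1 : BH G) - (if i.1 ∈ H then 1 else 0)‖ ≤ 1 / (i.2 + 1 : ℝ)}
  have := IsCompact.inter_iInter_nonempty (isCompact_stSet (B := BH G)) t (fun i =>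
    isClosed_le ((wd_eval_continuous _).sub continuous_const).norm continuous_const) (fun u => by
      obtain ⟨ξ, h1, h2, h3⟩ := almost_inv hy hinv ((u.image Prod.fst).filter (· ∈ H))
        (fun h hh => (Finset.mem_filter.1 hh).2) (ε := 1 / (u.sup Prod.snd + 1 : ℝ)) (by positivity)
      refine ⟨_, vf_mem h1, ?_⟩
      simp only [Set.mem_iInter]
      rintro ⟨g, n⟩ hi
      change ‖vf ξ (perm G G g : BH G) - (if g ∈ H then 1 else 0)‖ ≤ 1 / (n + 1 : ℝ)
      by_cases hg : g ∈ H
      · rw [if_pos hg]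
        refine (h3 g (Finset.mem_filter.2 ⟨Finset.mem_image.2 ⟨_, hi, rfl⟩, hg⟩)).trans ?_
        have : n ≤ u.sup Prod.snd := Finset.le_sup (f := Prod.snd) hi
        gcongr
      · rw [if_neg hg, h2 g hg, sub_zero, norm_zero]; positivity)
  obtain ⟨ω, h1, h2⟩ := this
  refine ⟨ω, h1, fun g => ?_⟩
  simp only [Set.mem_iInter] at h2
  rw [← sub_eq_zero, ← norm_eq_zero]
  refine le_antisymm (ge_of_tendsto' (tendsto_one_div_add_atTop_nhds_zero_nat (𝕜 := ℝ)) fun n => ?_)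
    (norm_nonneg _)
  exact h2 (g, n)

end P7

section P8

/-- representation of the group algebra. -/
def rep {B : Type*} [CStarAlgebra B] (U : G →* unitary B) : MonoidAlgebra ℂ G →ₐ[ℂ] B :=
  MonoidAlgebra.lift ℂ B G ((Submonoid.subtype (unitary B)).comp U)

theorem rep_single {B : Type*} [CStarAlgebra B] (U : G →* unitary B) (g : G) (c : ℂ) :
    rep U (MonoidAlgebra.single g c) = c • (U g : B) := by
  unfold rep; rw [MonoidAlgebra.lift_single]; rfl

theorem U_star {B : Type*} [CStarAlgebra B] (U : G →* unitary B) (g : G) :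
    star (U g : B) = (U g⁻¹ : B) := by
  rw [map_inv, ← Unitary.coe_star, Unitary.star_eq_inv]

theorem rep_star {B : Type*} [CStarAlgebra B] (U : G →* unitary B) (x : MonoidAlgebra ℂ G) :
    ∃ z, rep U z = star (rep U x) := by
  induction x using MonoidAlgebra.induction_linear with
  | zero => exact ⟨0, by simp⟩
  | add x y hx hy =>
    obtain ⟨a, ha⟩ := hx; obtain ⟨b, hb⟩ := hy
    exact ⟨a + b, by rw [map_add, map_add, star_add, ha, hb]⟩
  | single g c =>
    exact ⟨MonoidAlgebra.single g⁻¹ (star c), by rw [rep_single, rep_single, star_smul, U_star]⟩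

/-- The image of the group algebra. -/
def repRange {B : Type*} [CStarAlgebra B] (U : G →* unitary B) : StarSubalgebra ℂ B :=
  { (rep U).range with
    star_mem' := by
      rintro _ ⟨x, rfl⟩
      obtain ⟨z, hz⟩ := rep_star U x
      exact ⟨z, hz⟩ }

theorem red_dense {a : BH G} (ha : a ∈ redCstar G) {ε : ℝ} (hε : 0 < ε) :
    ∃ x, ‖a - rep (perm G G) x‖ < ε := by
  unfold redCstar at ha
  have h : StarAlgebra.adjoin ℂ (Set.range (lreg (G := G))) ≤ repRange (perm G G) := by
    refine StarAlgebra.adjoin_le ?_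
    rintro _ ⟨g, rfl⟩
    exact ⟨MonoidAlgebra.single g 1, by
      change rep (perm G G) _ = _
      rw [rep_single, one_smul, perm_eq_lreg]⟩
  have h2 : a ∈ closure (repRange (perm G G) : Set (BH G)) := closure_mono h ha
  rw [Metric.mem_closure_iff] at h2
  obtain ⟨b, ⟨x, rfl⟩, hb⟩ := h2 ε hε
  exact ⟨x, by rw [dist_eq_norm] at hb; exact hb⟩

theorem perm_mem_red (g : G) : (perm G G g : BH G) ∈ redCstar G := by
  unfold redCstar
  rw [perm_eq_lreg]
  exact StarSubalgebra.le_topologicalClosure _ (StarAlgebra.subset_adjoin ℂ _ ⟨g, rfl⟩)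

theorem rep_mem_red (x : MonoidAlgebra ℂ G) : rep (perm G G) x ∈ redCstar G := by
  induction x using MonoidAlgebra.induction_linear with
  | zero => rw [map_zero]; exact zero_mem _
  | add x y hx hy => rw [map_add]; exact add_mem hx hy
  | single g c => rw [rep_single]; exact (redCstar G).smul_mem (perm_mem_red g) c

theorem red_closed : IsClosed (redCstar G : Set (BH G)) := by
  unfold redCstar
  exact StarSubalgebra.isClosed_topologicalClosure _

open Classical in
theorem sesq {H : Subgroup G} {ω : WeakDual ℂ (BH G)}
    (hH : ∀ g, ω (perm G G g : BH G) = if g ∈ H then 1 else 0) (x z : MonoidAlgebra ℂ G) :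
    ω (star (rep (perm G G) x) * rep (perm G G) z) =
      inner ℂ (rep (perm G (G ⧸ H)) x (dl (QuotientGroup.mk 1)))
        (rep (perm G (G ⧸ H)) z (dl (QuotientGroup.mk 1))) := by
  induction x using MonoidAlgebra.induction_linear with
  | zero => simp
  | add x y hx hy =>
    rw [map_add, map_add, star_add, add_mul, map_add, hx, hy, add_apply, inner_add_left]
  | single g c =>
    induction z using MonoidAlgebra.induction_linear with
    | zero => simp
    | add x y hx hy =>
      rw [map_add, map_add, mul_add, map_add, hx, hy, add_apply, inner_add_right]
    | single h d =>
      simp only [rep_single, star_smul, U_star, smul_mul_smul_comm]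
      rw [← U_mul, map_smul, hH, smul_apply, smul_apply,
        inner_smul_left, inner_smul_right, perm_dl, perm_dl, dl_inner, dl_apply]
      have : (g • (QuotientGroup.mk 1 : G ⧸ H) = h • (QuotientGroup.mk 1 : G ⧸ H)) ↔ g⁻¹ * h ∈ H := by
        rw [MulAction.Quotient.smul_mk, MulAction.Quotient.smul_mk, smul_eq_mul, smul_eq_mul,
          mul_one, mul_one]
        exact QuotientGroup.eq
      by_cases hg : g⁻¹ * h ∈ H
      · rw [if_pos hg, if_pos (this.2 hg)]; simp
      · rw [if_neg hg, if_neg (fun h' => hg (this.1 h'))]; simp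

theorem inner_re_aux {E : Type*} [NormedAddCommGroup E] [InnerProductSpace ℂ E] (v : E) :
    (inner ℂ v v : ℂ).re = ‖v‖ ^ 2 := inner_self_eq_norm_sq (𝕜 := ℂ) v

theorem cl_aux {E : Type*} [NormedAddCommGroup E] [NormedSpace ℂ E] (L : E →L[ℂ] E) (K : ℝ) :
    IsClosed {v | ‖L v‖ ≤ K * ‖v‖} :=
  isClosed_le L.continuous.norm (continuous_const.mul continuous_norm)

theorem sqrt_aux {a b K : ℝ} (hK : 0 ≤ K) (h : a ≤ K ^ 2 * b) : √a ≤ K * √b := by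
  rw [← Real.sqrt_sq hK, ← Real.sqrt_mul (sq_nonneg _)]
  exact Real.sqrt_le_sqrt h

theorem cont_aux {B : Type*} [CStarAlgebra B] (φ : B →L[ℂ] ℂ) (a : B) (K : ℝ) :
    IsClosed {c : B | (φ (star (a * c) * (a * c))).re ≤ K * (φ (star c * c)).re} := by
  have h1 : Continuous (fun c : B => a * c) := continuous_const.mul continuous_id
  have h2 : Continuous (fun c : B => star (a * c) * (a * c)) := h1.star.mul h1
  have h3 : Continuous (fun c : B => star c * c) := continuous_star.mul continuous_id
  exact isClosed_le (Complex.continuous_re.comp (φ.continuous.comp h2))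
    (continuous_const.mul (Complex.continuous_re.comp (φ.continuous.comp h3)))

open Classical in
theorem gns_bound {H : Subgroup G} {ω : WeakDual ℂ (BH G)}
    (hH : ∀ g, ω (perm G G g : BH G) = if g ∈ H then 1 else 0) (x : MonoidAlgebra ℂ G)
    {c : BH G} (hc : c ∈ redCstar G) :
    (ω (star (rep (perm G G) x * c) * (rep (perm G G) x * c))).re ≤
      ‖rep (perm G (G ⧸ H)) x‖ ^ 2 * (ω (star c * c)).re := by
  have hcl : IsClosed {c : BH G | (ω (star (rep (perm G G) x * c) * (rep (perm G G) x * c))).re ≤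
      ‖rep (perm G (G ⧸ H)) x‖ ^ 2 * (ω (star c * c)).re} := by
    exact cont_aux (WeakDual.toStrongDual ω) _ _
  have hcc : c ∈ closure (Set.range (rep (perm G G))) := by
    rw [Metric.mem_closure_iff]
    intro ε hε
    obtain ⟨z, hz⟩ := red_dense hc hε
    exact ⟨_, ⟨z, rfl⟩, by rw [dist_eq_norm]; exact hz⟩
  refine hcl.closure_subset_iff.2 ?_ hcc
  rintro _ ⟨z, rfl⟩
  change (ω (star (rep (perm G G) x * rep (perm G G) z) * (rep (perm G G) x * rep (perm G G) z))).re ≤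
      ‖rep (perm G (G ⧸ H)) x‖ ^ 2 * (ω (star (rep (perm G G) z) * rep (perm G G) z)).re
  rw [← map_mul, sesq hH, sesq hH, map_mul, inner_re_aux, inner_re_aux, ← mul_pow]
  gcongr
  exact (rep (perm G (G ⧸ H)) x).le_opNorm _

open Classical in
theorem norm_le_quot (hs : IsCstarSimple G) {H : Subgroup G} {ω : WeakDual ℂ (BH G)}
    (hω : ω ∈ stSet (BH G))
    (hH : ∀ g, ω (perm G G g : BH G) = if g ∈ H then 1 else 0) (x : MonoidAlgebra ℂ G) :
    ‖rep (perm G G) x‖ ≤ ‖rep (perm G (G ⧸ H)) x‖ := by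
  have _ : IsClosed (redCstar G : Set (BH G)) := red_closed
  let _ : CStarAlgebra (redCstar G) := StarSubalgebra.cstarAlgebra (redCstar G)
  let _ : PartialOrder (redCstar G) := CStarAlgebra.spectralOrder _
  have _ : StarOrderedRing (redCstar G) := CStarAlgebra.spectralOrderedRing _
  let φ : redCstar G →L[ℂ] ℂ := (WeakDual.toStrongDual ω).comp (redCstar G).toSubmodule.subtypeL
  have hφ : ∀ a : redCstar G, φ a = ω (a : BH G) := fun _ => rfl
  have hst : IsSt φ := ⟨hω.1, fun b => hω.2 (b : BH G)⟩
  let f := hst.toPos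
  have hf : ∀ a, f a = ω (a : BH G) := fun _ => rfl
  let π := f.gnsStarAlgHom
  have hπ : ∀ (a : redCstar G) (c : redCstar G),
      ‖π a (f.toPreGNS c : f.GNS)‖ = √(ω (star ((a : BH G) * c) * ((a : BH G) * c))).re := by
    intro a c
    have : π a (f.toPreGNS c : f.GNS) = (f.toPreGNS (a * c) : f.GNS) := by
      change f.gnsNonUnitalStarAlgHom a _ = _
      rw [PositiveLinearMap.gnsNonUnitalStarAlgHom_apply_coe]; rfl
    rw [this, UniformSpace.Completion.norm_coe, PositiveLinearMap.preGNS_norm_def]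
    rfl
  have hinj : Function.Injective π := by
    rw [← TwoSidedIdeal.ker_eq_bot]
    refine (hs (TwoSidedIdeal.ker π) ?_).resolve_right ?_
    · have : ((TwoSidedIdeal.ker π : TwoSidedIdeal (redCstar G)) : Set (redCstar G)) = {a | π a = 0} := by
        ext a; exact TwoSidedIdeal.mem_ker π
      rw [this]
      exact isClosed_eq (map_continuous π) continuous_const
    · intro htop
      have h1 : (1 : redCstar G) ∈ TwoSidedIdeal.ker π := by rw [htop]; trivial
      rw [TwoSidedIdeal.mem_ker] at h1
      have := hπ 1 1
      rw [h1] at this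
      simp [hω.1] at this
  have hiso := NonUnitalStarAlgHom.norm_map π hinj ⟨rep (perm G G) x, rep_mem_red x⟩
  have hnorm : ‖(⟨rep (perm G G) x, rep_mem_red x⟩ : redCstar G)‖ = ‖rep (perm G G) x‖ := rfl
  rw [← hnorm, ← hiso]
  refine ContinuousLinearMap.opNorm_le_bound _ (norm_nonneg _) fun v => ?_
  induction v using UniformSpace.Completion.induction_on with
  | hp => exact cl_aux _ _
  | ih c =>
    obtain ⟨c, rfl⟩ := f.toPreGNS.surjective c
    have e1 := hπ ⟨rep (perm G G) x, rep_mem_red x⟩ c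
    have e2 : ‖(f.toPreGNS c : f.GNS)‖ = √(ω (star (c : BH G) * c)).re :=
      UniformSpace.Completion.norm_coe _
    refine (le_of_eq e1).trans ?_
    refine le_of_le_of_eq ?_ (congrArg (fun r => ‖rep (perm G (G ⧸ H)) x‖ * r) e2.symm)
    exact sqrt_aux (norm_nonneg _) (gns_bound hH x c.2)

end P8

section P9

theorem ext_fun {M E : Type*} [AddCommGroup M] [Module ℂ M] [NormedAddCommGroup E] [NormedSpace ℂ E]
    (L : M →ₗ[ℂ] E) (f : M →ₗ[ℂ] ℂ) (h : ∀ x, ‖f x‖ ≤ ‖L x‖) :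
    ∃ F : E →L[ℂ] ℂ, (∀ x, F (L x) = f x) ∧ ∀ b, ‖F b‖ ≤ ‖b‖ := by
  have hk : LinearMap.ker L ≤ LinearMap.ker f := by
    intro x hx
    rw [LinearMap.mem_ker] at hx ⊢
    have := h x
    rw [hx, norm_zero] at this
    exact norm_le_zero_iff.1 this
  let f' : LinearMap.range L →ₗ[ℂ] ℂ :=
    ((LinearMap.ker L).liftQ f hk).comp L.quotKerEquivRange.symm.toLinearMap
  have hf' : ∀ x, f' ⟨L x, LinearMap.mem_range_self L x⟩ = f x := by
    intro x
    simp only [f', LinearMap.comp_apply, LinearEquiv.coe_coe]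
    have : L.quotKerEquivRange.symm ⟨L x, LinearMap.mem_range_self L x⟩ =
      (LinearMap.ker L).mkQ x := L.quotKerEquivRange_symm_apply_image x _
    rw [this]; simp
  let f'' : StrongDual ℂ (LinearMap.range L) := f'.mkContinuous 1 (by
    rintro ⟨_, x, rfl⟩
    rw [hf', one_mul]; exact h x)
  obtain ⟨F, hF, hn⟩ := exists_extension_norm_eq (LinearMap.range L) f''
  refine ⟨F, fun x => ?_, fun b => ?_⟩
  · exact (hF ⟨L x, LinearMap.mem_range_self L x⟩).trans (hf' x)
  · refine (F.le_opNorm b).trans ?_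
    rw [hn]
    have : ‖f''‖ ≤ 1 := LinearMap.mkContinuous_norm_le _ zero_le_one _
    exact mul_le_of_le_one_left (norm_nonneg _) this

open Classical in
/-- states that vanish on nontrivial group elements. -/
def trSt (G : Type u) [Group G] (T : Type u) [MulAction G T] : Set (WeakDual ℂ (BH T)) :=
  {ρ | ρ ∈ stSet (BH T) ∧ ∀ g : G, ρ (perm G T g : BH T) = if g = 1 then 1 else 0}

open Classical in
theorem trSt_good {T : Type u} [MulAction G T] (hne : (trSt G T).Nonempty) :
    Good (perm G T) (trSt G T) where
  sub := fun _ h => h.1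
  closed := by
    have : trSt G T = stSet (BH T) ∩ ⋂ g : G, {ρ | ρ (perm G T g : BH T) = if g = 1 then 1 else 0} := by
      ext ρ; simp [trSt]
    rw [this]
    exact isClosed_stSet.inter (isClosed_iInter fun g =>
      isClosed_eq (wd_eval_continuous _) continuous_const)
  conv := by
    intro φ hφ ψ hψ a b ha hb hab
    refine ⟨convex_stSet hφ.1 hψ.1 ha hb hab, fun g => ?_⟩
    change a • φ _ + b • ψ _ = _
    rw [hφ.2, hψ.2, ← add_smul, hab, one_smul]
  inv := by
    intro g φ hφ
    refine ⟨act_stSet _ g hφ.1, fun t => ?_⟩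
    rw [act_apply, cj_apply, ← U_mul, ← U_mul, hφ.2]
    have : (g⁻¹ * t * g⁻¹⁻¹ = 1) ↔ t = 1 := by
      rw [inv_inv, mul_assoc, inv_mul_eq_one, eq_comm, mul_eq_right]
    by_cases h : t = 1
    · rw [if_pos h, if_pos (this.2 h)]
    · rw [if_neg h, if_neg (fun h' => h (this.1 h'))]
  ne := hne

open Classical in
theorem trSt_ne (hs : IsCstarSimple G) {H : Subgroup G} {y : WeakDual ℂ (BH G)}
    (hy : y ∈ stSet (BH G)) (hinv : ∀ h ∈ H, ∀ b, y (cj (perm G G) h b) = y b) :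
    (trSt G (G ⧸ H)).Nonempty := by
  obtain ⟨ω, hω, hH⟩ := exists_state_H hy hinv
  have hv := vf_mem (dl_norm (1 : G))
  obtain ⟨F, hF, hFn⟩ := ext_fun (rep (perm G (G ⧸ H))).toLinearMap
    ((vf (dl (1 : G))).toLinearMap.comp (rep (perm G G)).toLinearMap) (fun x =>
      (hv.2 _).trans (norm_le_quot hs hω hH x))
  have hg : ∀ g : G, F (perm G (G ⧸ H) g : BH (G ⧸ H)) = if g = 1 then 1 else 0 := by
    intro g
    have h1 := hF (MonoidAlgebra.single g 1)
    have h2 : (rep (perm G (G ⧸ H))).toLinearMap (MonoidAlgebra.single g 1) =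
      (perm G (G ⧸ H) g : BH (G ⧸ H)) := by
      rw [AlgHom.toLinearMap_apply, rep_single, one_smul]
    rw [h2] at h1
    rw [h1, LinearMap.comp_apply, AlgHom.toLinearMap_apply, rep_single, one_smul]
    change vf (dl (1 : G)) _ = _
    rw [vf_apply, perm_dl, dl_inner, dl_apply]
    simp only [smul_eq_mul, mul_one, eq_comm]
  refine ⟨StrongDual.toWeakDual F, ⟨?_, hFn⟩, hg⟩
  have := hg 1
  rw [if_pos rfl, map_one] at this
  exact this

open Classical in
/-- indicator. -/
def ind {T : Type u} (A : Set T) : ℓ^∞(T, ℂ) := mkInf (fun s => if s ∈ A then 1 else 0) 1 (fun s => by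
  split_ifs <;> simp)

open Classical in
theorem ind_apply {T : Type u} (A : Set T) (s : T) : ind A s = if s ∈ A then 1 else 0 := rfl

theorem perm_ind {T : Type u} [MulAction G T] (t : G) :
    (perm G T t : BH T) * Dg T (ind {s | t • s = s}) = Dg T (ind {s | t • s = s}) := by
  apply ContinuousLinearMap.ext; intro ξ; ext s
  rw [mul_apply_eq_comp, perm_apply, Dg_apply, Dg_apply, ind_apply, ind_apply]
  by_cases h : t • s = s
  · have : t⁻¹ • s = s := by rw [inv_smul_eq_iff, h]
    rw [this]
  · have : ¬ (t • t⁻¹ • s = t⁻¹ • s) := by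
      rw [smul_inv_smul]; intro h'; apply h
      conv_lhs => rw [h', smul_inv_smul]
    rw [if_neg (by simpa using this), if_neg (by simpa using h)]; simp

end P9

section P10

theorem ind_zero {T : Type u} {ω : WeakDual ℂ (BH T)} (hω : ω ∈ stSet (BH T)) {ι : Type*}
    (R : Finset ι) (V : ι → Set T) (A : Set T) (hA : ∀ s ∈ A, ∃ r ∈ R, s ∈ V r)
    (hV : ∀ r ∈ R, ω (Dg T (ind (V r))) = 0) : ω (Dg T (ind A)) = 0 := by
  have hst := stSet_isSt hω
  have h1 : 0 ≤ ω (Dg T (ind A)) := hst.nonneg (Dg_pos (Dg T) (fun s => by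
    rw [ind_apply]; split_ifs <;> simp))
  have h2 : 0 ≤ ω (Dg T ((∑ r ∈ R, ind (V r)) - ind A)) := hst.nonneg (Dg_pos (Dg T) (fun s => by
    have e : ((∑ r ∈ R, ind (V r)) - ind A : ℓ^∞(T, ℂ)) s = (∑ r ∈ R, ind (V r)) s - ind A s := rfl
    have e2 : (∑ r ∈ R, ind (V r) : ℓ^∞(T, ℂ)) s = ∑ r ∈ R, ind (V r) s := by
      rw [lp.coeFn_sum, Finset.sum_apply]
    rw [e, e2, sub_nonneg]
    have h0 : ∀ r ∈ R, (0 : ℂ) ≤ ind (V r) s := fun r _ => by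
      rw [ind_apply]; split_ifs <;> simp
    by_cases hs : s ∈ A
    · obtain ⟨r, hr, hsr⟩ := hA s hs
      have h3 := Finset.single_le_sum h0 hr
      rw [ind_apply, if_pos hsr] at h3
      rw [ind_apply A, if_pos hs]; exact h3
    · rw [ind_apply A, if_neg hs]; exact Finset.sum_nonneg h0))
  rw [map_sub, map_sum, map_sub, map_sum, Finset.sum_eq_zero hV, zero_sub] at h2
  exact le_antisymm (neg_nonneg.1 h2) h1

theorem ind_one {T : Type u} {ω : WeakDual ℂ (BH T)} (hω : ω ∈ stSet (BH T))
    (A : Set T) (hA : ω (Dg T (ind Aᶜ)) = 0) (x : BH T) : ω (x * Dg T (ind A)) = ω x := by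
  have hst := stSet_isSt hω
  have e1 : ind A = 1 - ind Aᶜ := by
    ext s
    have e : (1 - ind Aᶜ : ℓ^∞(T, ℂ)) s = 1 - ind Aᶜ s := rfl
    rw [e, ind_apply, ind_apply]
    by_cases h : s ∈ A <;> simp [h]
  have e2 : star (ind Aᶜ) * ind Aᶜ = ind Aᶜ := by
    ext s
    have e : (star (ind Aᶜ) * ind Aᶜ : ℓ^∞(T, ℂ)) s = star (ind Aᶜ s) * ind Aᶜ s := rfl
    rw [e, ind_apply]
    by_cases h : s ∈ A <;> simp [h]
  have h1 : ω (x * Dg T (ind Aᶜ)) = 0 := hst.cs (by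
    rw [← map_star, ← map_mul, e2]; exact hA) x
  rw [e1, map_sub, map_one, mul_sub, mul_one, map_sub, h1, sub_zero]

/-- stabilizer. -/
def stab (y : WeakDual ℂ (BH G)) : Subgroup G where
  carrier := {g | act (perm G G) g y = y}
  one_mem' := act_one _ _
  mul_mem' {a b} ha hb := by
    change act _ _ _ = _
    rw [act_mul, show act (perm G G) b y = y from hb]; exact ha
  inv_mem' {a} ha := by
    change act _ _ _ = _
    conv_lhs => rw [← show act (perm G G) a y = y from ha]
    exact act_inv_act _ _ _

/-- orbit map. -/
def orb (y : WeakDual ℂ (BH G)) (s : G ⧸ stab y) : WeakDual ℂ (BH G) :=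
  act (perm G G) s.out y

theorem orb_mk (y : WeakDual ℂ (BH G)) (g : G) : orb y (g : G ⧸ stab y) = act (perm G G) g y := by
  unfold orb
  obtain ⟨h, hh⟩ := QuotientGroup.mk_out_eq_mul (stab y) g
  rw [hh, act_mul, show act (perm G G) h y = y from h.2]

theorem orb_smul (y : WeakDual ℂ (BH G)) (g : G) (s : G ⧸ stab y) :
    orb y (g • s) = act (perm G G) g (orb y s) := by
  induction s using QuotientGroup.induction_on with
  | H x =>
    have : g • (x : G ⧸ stab y) = ((g * x : G) : G ⧸ stab y) := rfl
    rw [this, orb_mk, orb_mk, act_mul]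

theorem orb_fix (y : WeakDual ℂ (BH G)) (g : G) (s : G ⧸ stab y) :
    g • s = s ↔ act (perm G G) g (orb y s) = orb y s := by
  rw [← orb_smul]
  constructor
  · intro h; rw [h]
  · induction s using QuotientGroup.induction_on with
    | H x =>
      have : g • (x : G ⧸ stab y) = ((g * x : G) : G ⧸ stab y) := rfl
      rw [this, orb_mk, orb_mk]
      intro h
      rw [QuotientGroup.eq]
      change act _ _ _ = _
      rw [act_mul, ← h, act_inv_act]

open Classical in
theorem no_fix (hs : IsCstarSimple G) {Q : Set (WeakDual ℂ (BH G))}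
    (hQ : Good (perm G G) Q) (hmin : ∀ Q', Good (perm G G) Q' → Q' ⊆ Q → Q' = Q)
    {y : WeakDual ℂ (BH G)} (hy : y ∈ Q.extremePoints ℝ) (F : Finset G) (hF : 1 ∉ F)
    (hcard : ∀ g : G, (F.filter fun t => act (perm G G) t y = y).card ≤
      (F.filter fun t => act (perm G G) t (act (perm G G) g y) = act (perm G G) g y).card) :
    ∀ t ∈ F, act (perm G G) t y ≠ y := by
  intro t htF hty
  have hqQ : ∀ s, orb y s ∈ Q := fun s => hQ.inv _ y hy.1
  have hq : ∀ s, orb y s ∈ stSet (BH G) := fun s => hQ.sub (hqQ s)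
  have hS : Good (perm G (G ⧸ stab y)) (trSt G (G ⧸ stab y)) := trSt_good (trSt_ne hs (hQ.sub hy.1)
    (fun h hh b => by
      have : act (perm G G) h⁻¹ y = y := (stab y).inv_mem hh
      conv_rhs => rw [← this]
      rw [act_apply, inv_inv]))
  obtain ⟨ω, hω, -, h2, -, -⟩ := core_exists (Dg := Dg (G ⧸ stab y)) Dg_cov hS hQ hmin hq hqQ
    (orb_smul y) hy
  have hr : ∀ r : G, act (perm G G) r y ≠ y →
      ω (Dg (G ⧸ stab y) (ind {s | r • s = s})) = 0 := by
    intro r hr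
    by_contra h0
    apply hr
    apply DFunLike.ext
    intro b
    have e1 : ind {s : G ⧸ stab y | r • s = s} * evq (orb y) hq b =
        ind {s : G ⧸ stab y | r • s = s} * evq (orb y) hq (cj (perm G G) r⁻¹ b) := by
      ext s
      have e : ∀ c, (ind {s : G ⧸ stab y | r • s = s} * evq (orb y) hq c) s =
        ind {s : G ⧸ stab y | r • s = s} s * orb y s c := fun c => rfl
      rw [e, e, ind_apply]
      by_cases hsr : r • s = s
      · have h5 := (orb_fix y r s).1 hsr
        have h6 : act (perm G G) r (orb y s) b = orb y s b := by rw [h5]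
        rw [act_apply] at h6
        rw [h6]
      · rw [if_neg (by simpa using hsr), zero_mul, zero_mul]
    have e2 := h2 (ind {s : G ⧸ stab y | r • s = s}) b
    rw [Pm_apply, ← map_mul, e1, map_mul, ← Pm_apply, h2] at e2
    rw [act_apply]
    exact mul_left_cancel₀ h0 e2
  have h3 : ω (Dg (G ⧸ stab y) (ind {s | t • s = s}ᶜ)) = 0 := by
    refine ind_zero hω.1 (F.filter fun t => act (perm G G) t y ≠ y)
      (fun r => {s : G ⧸ stab y | r • s = s}) _ (fun s hs => ?_) (fun r h => ?_)
    · by_contra hcon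
      push Not at hcon
      have hsub : (F.filter fun t => act (perm G G) t (orb y s) = orb y s) ⊂
          (F.filter fun t => act (perm G G) t y = y) := by
        rw [Finset.ssubset_iff_of_subset]
        · refine ⟨t, by simp [htF, hty], fun h => hs ?_⟩
          exact (orb_fix y t s).2 (Finset.mem_filter.1 h).2
        · intro r hr'
          rw [Finset.mem_filter] at hr' ⊢
          refine ⟨hr'.1, ?_⟩
          by_contra h'
          exact hcon r (Finset.mem_filter.2 ⟨hr'.1, h'⟩) ((orb_fix y r s).2 hr'.2)
      exact absurd (Finset.card_lt_card hsub) (not_lt.2 (hcard s.out))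
    · exact hr r (Finset.mem_filter.1 h).2
  have h4 := ind_one hω.1 _ h3 (perm G (G ⧸ stab y) t : BH (G ⧸ stab y))
  have h5 := ind_one hω.1 _ h3 1
  have ht1 : t ≠ 1 := fun h => hF (h ▸ htF)
  rw [perm_ind, hω.2, if_neg ht1] at h4
  rw [one_mul, h4] at h5
  exact zero_ne_one (h5.trans hω.1.1)

open Classical in
theorem kill (hs : IsCstarSimple G) {S : Set (WeakDual ℂ (BH G))} (hS : Good (perm G G) S)
    (F : Finset G) (hF : 1 ∉ F) : ∃ ω ∈ S, ∀ t ∈ F, ω (perm G G t : BH G) = 0 := by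
  obtain ⟨Q, hQ, hmin⟩ := exists_minimal_good (perm G G) (good_stSet (perm G G))
  obtain ⟨x0, hx0⟩ := hQ.compact.extremePoints_nonempty hQ.ne
  let N : G → ℕ := fun g =>
    (F.filter fun t => act (perm G G) t (act (perm G G) g x0) = act (perm G G) g x0).card
  obtain ⟨g0, hg0⟩ : ∃ g0, ∀ g, N g0 ≤ N g :=
    ⟨Function.argmin N, fun g => Function.argmin_le N g⟩
  have hy := act_extreme hQ g0 hx0
  obtain ⟨ω, hω, h⟩ := case_one hS hQ hmin hy
  refine ⟨ω, hω, fun t ht => h t (no_fix hs hQ hmin hy F hF (fun g => ?_) t ht)⟩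
  rw [← act_mul]
  exact hg0 (g * g0)

end P10

section P11
variable {B : Type*} [CStarAlgebra B] [PartialOrder B] [StarOrderedRing B]

theorem re_smul' (F : B →L[ℂ] ℂ) (r : ℝ) (x : B) : (F (r • x)).re = r * (F x).re := by
  rw [← Complex.coe_smul, map_smul, smul_eq_mul, Complex.re_ofReal_mul]

/-- hermitian part of a functional -/
def herm (F : B →L[ℂ] ℂ) (c : ℝ) : B →ₗ[ℂ] ℂ where
  toFun x := (c : ℂ) * (F x + star (F (star x)))
  map_add' x y := by simp; ring
  map_smul' z x := by simp; ring

theorem herm_apply (F : B →L[ℂ] ℂ) (c : ℝ) (x : B) :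
    herm F c x = (c : ℂ) * (F x + star (F (star x))) := rfl

theorem herm_re (F : B →L[ℂ] ℂ) (c : ℝ) (x : B) :
    (herm F c x).re = c * (F (x + star x)).re := by
  rw [herm_apply, Complex.re_ofReal_mul, map_add]; simp

theorem norm_le_of_re (L : B →ₗ[ℂ] ℂ) (h : ∀ x, (L x).re ≤ ‖x‖) (x : B) : ‖L x‖ ≤ ‖x‖ := by
  by_cases h0 : L x = 0
  · rw [h0, norm_zero]; exact norm_nonneg _
  have h1 := h ((star (L x) / ‖L x‖) • x)
  have hn : (‖L x‖ : ℂ) ≠ 0 := by exact_mod_cast norm_ne_zero_iff.2 h0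
  have e : (star (L x) / ‖L x‖) * L x = (‖L x‖ : ℂ) := by
    rw [div_mul_eq_mul_div, div_eq_iff hn, Complex.star_def, Complex.conj_mul']; ring
  rw [map_smul, smul_eq_mul, e, norm_smul, norm_div, norm_star, Complex.norm_real, norm_norm,
    div_self (norm_ne_zero_iff.2 h0), one_mul, Complex.ofReal_re] at h1
  exact h1

open scoped Pointwise in
theorem sep_state {K : Set B} (hK : Convex ℝ K) (hne : K.Nonempty)
    (hsa : ∀ k ∈ K, IsSelfAdjoint k) {ε : ℝ} (hε : 0 < ε)
    (hn : ∀ k ∈ K, ¬ k ≤ algebraMap ℝ B ε) :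
    ∃ s ∈ stSet B, ∀ k ∈ K, ε ≤ (s k).re := by
  have hNc : Convex ℝ {p : B | p ≤ 0} := convex_Iic 0
  have hO1 : Convex ℝ ({p : B | p ≤ 0} + Metric.ball (0 : B) ε) := hNc.add (convex_ball 0 ε)
  have hO2 : IsOpen ({p : B | p ≤ 0} + Metric.ball (0 : B) ε) := Metric.isOpen_ball.add_left
  have hmem : ∀ p : B, p ≤ 0 → ∀ y : B, ‖y‖ < ε →
      p + y ∈ ({p : B | p ≤ 0} + Metric.ball (0 : B) ε) :=
    fun p hp y hy => Set.add_mem_add hp (by simpa using hy)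
  have hd : Disjoint ({p : B | p ≤ 0} + Metric.ball (0 : B) ε) K := by
    rw [Set.disjoint_left]
    rintro _ ⟨p, hp, y, hy, rfl⟩ hk
    have hp' : p ≤ 0 := hp
    have hy1 : ‖y‖ < ε := by simpa using hy
    have hps : IsSelfAdjoint p := by
      have := (IsSelfAdjoint.of_nonneg (neg_nonneg.2 hp')).neg
      rwa [neg_neg] at this
    have hys : IsSelfAdjoint y := by
      have := (hsa _ hk).sub hps
      simpa using this
    refine hn _ hk ?_
    calc p + y ≤ 0 + y := by gcongr
      _ = y := zero_add y
      _ ≤ algebraMap ℝ B ‖y‖ := hys.le_algebraMap_norm_self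
      _ ≤ algebraMap ℝ B ε := algebraMap_mono B hy1.le
  have hsep := RCLike.geometric_hahn_banach_open (𝕜 := ℂ) (E := B) hO1 hO2 hK hd
  obtain ⟨F, u, h1, h2⟩ := hsep
  have h1' : ∀ p : B, p ≤ 0 → ∀ y : B, ‖y‖ < ε → (F (p + y)).re < u :=
    fun p hp y hy => h1 _ (hmem p hp y hy)
  have h2' : ∀ k ∈ K, u ≤ (F k).re := h2
  have hu : 0 < u := by simpa using h1' 0 le_rfl 0 (by simpa using hε)
  have hpos : ∀ p : B, 0 ≤ p → 0 ≤ (F p).re := by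
    intro p hp
    by_contra hneg
    push Not at hneg
    have h3 := h1' ((-(u / -(F p).re)) • p) (by
      rw [neg_smul, neg_nonpos]
      exact smul_nonneg (div_nonneg hu.le (by linarith)) hp) 0 (by simpa using hε)
    rw [add_zero, re_smul'] at h3
    have : -(u / -(F p).re) * (F p).re = u := by field_simp [hneg.ne]
    linarith
  have hf1 : 0 ≤ (F 1).re := hpos 1 zero_le_one
  have hle : ∀ b : B, IsSelfAdjoint b → (F b).re ≤ ‖b‖ * (F 1).re := by
    intro b hb
    have := hpos _ (sub_nonneg.2 hb.le_algebraMap_norm_self)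
    rw [map_sub, Complex.sub_re, Algebra.algebraMap_eq_smul_one, re_smul'] at this
    linarith
  have hf1' : 0 < (F 1).re := by
    rcases hf1.lt_or_eq with h | h
    · exact h
    · obtain ⟨k, hk⟩ := hne
      have := hle k (hsa k hk)
      rw [← h, mul_zero] at this
      have := h2' k hk
      linarith
  have hεu : ε * (F 1).re ≤ u := by
    by_contra hlt
    push Not at hlt
    have hnt : Nontrivial B := ⟨⟨1, 0, fun h => by rw [h, map_zero] at hf1'; simp at hf1'⟩⟩
    have hq : u / (F 1).re < ε := by rw [div_lt_iff₀ hf1']; exact hlt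
    have h3 := h1' 0 le_rfl ((u / (F 1).re) • 1) (by
      rw [norm_smul, norm_one, mul_one, Real.norm_of_nonneg (by positivity)]; exact hq)
    rw [zero_add, re_smul', div_mul_cancel₀ _ hf1'.ne'] at h3
    exact lt_irrefl _ h3
  let c : ℝ := (2 * (F 1).re)⁻¹
  have hc : c * 2 * (F 1).re = 1 := by simp only [c]; field_simp
  have hc0 : 0 < c := by simp only [c]; positivity
  have hre : ∀ x, (herm F c x).re ≤ ‖x‖ := by
    intro x
    rw [herm_re]
    have h3 := hle (x + star x) (IsSelfAdjoint.add_star_self x)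
    have h4 : ‖x + star x‖ ≤ 2 * ‖x‖ := by
      refine (norm_add_le _ _).trans ?_
      rw [norm_star]; linarith
    calc c * (F (x + star x)).re ≤ c * (‖x + star x‖ * (F 1).re) := by gcongr
      _ ≤ c * ((2 * ‖x‖) * (F 1).re) := by gcongr
      _ = (c * 2 * (F 1).re) * ‖x‖ := by ring
      _ = ‖x‖ := by rw [hc, one_mul]
  have hnorm := norm_le_of_re (herm F c) hre
  have hsare : ∀ b, IsSelfAdjoint b → herm F c b = ((c * 2 * (F b).re : ℝ) : ℂ) := by
    intro b hb
    rw [herm_apply, hb.star_eq, Complex.star_def, Complex.add_conj]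
    push_cast; ring
  refine ⟨StrongDual.toWeakDual ((herm F c).mkContinuous 1 (fun x => by
    rw [one_mul]; exact hnorm x)), ⟨?_, hnorm⟩, fun k hk => ?_⟩
  · change herm F c 1 = 1
    rw [hsare 1 (IsSelfAdjoint.one B), hc, Complex.ofReal_one]
  · change ε ≤ (herm F c k).re
    rw [hsare k (hsa k hk), Complex.ofReal_re]
    have h3 := h2' k hk
    calc ε = c * 2 * (ε * (F 1).re) := by rw [show c * 2 * (ε * (F 1).re) = c * 2 * (F 1).re * ε by ring, hc, one_mul]
      _ ≤ c * 2 * (F k).re := by gcongr; linarith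

/-- averaging operators. -/
def avg (U : G →* unitary B) : Set (B →L[ℂ] B) := convexHull ℝ (Set.range (cj U))

theorem avg_ind {U : G →* unitary B} {P : B →L[ℂ] B} (hP : P ∈ avg U) (C : Set (B →L[ℂ] B))
    (hC : Convex ℝ C) (h : ∀ g, cj U g ∈ C) : P ∈ C :=
  convexHull_min (by rintro _ ⟨g, rfl⟩; exact h g) hC hP

theorem cj_star (U : G →* unitary B) (g : G) (x : B) : cj U g (star x) = star (cj U g x) := by
  rw [cj_apply, cj_apply, star_mul, star_mul, U_star, U_star, inv_inv, mul_assoc]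

theorem cj_nonneg (U : G →* unitary B) (g : G) {x : B} (hx : 0 ≤ x) : 0 ≤ cj U g x := by
  rw [cj_apply, ← U_star]; exact star_right_conjugate_nonneg hx _

theorem avg_one {U : G →* unitary B} {P : B →L[ℂ] B} (hP : P ∈ avg U) : P 1 = 1 := by
  refine avg_ind hP {P | P 1 = 1} ?_ (fun g => cj_unit U g)
  intro P hP Q hQ a b ha hb hab
  change a • P 1 + b • Q 1 = 1
  rw [show P 1 = 1 from hP, show Q 1 = 1 from hQ, ← add_smul, hab, one_smul]

theorem avg_star {U : G →* unitary B} {P : B →L[ℂ] B} (hP : P ∈ avg U) (x : B) :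
    P (star x) = star (P x) := by
  refine avg_ind hP {P | P (star x) = star (P x)} ?_ (fun g => cj_star U g x)
  intro P hP Q hQ a b ha hb hab
  change a • P (star x) + b • Q (star x) = star (a • P x + b • Q x)
  rw [show P _ = _ from hP, show Q _ = _ from hQ]
  simp

theorem avg_nonneg {U : G →* unitary B} {P : B →L[ℂ] B} (hP : P ∈ avg U) {x : B} (hx : 0 ≤ x) :
    0 ≤ P x := by
  refine avg_ind hP {P | 0 ≤ P x} ?_ (fun g => cj_nonneg U g hx)
  intro P hP Q hQ a b ha hb hab
  change 0 ≤ a • P x + b • Q x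
  exact add_nonneg (smul_nonneg ha hP) (smul_nonneg hb hQ)

theorem avg_norm {U : G →* unitary B} {P : B →L[ℂ] B} (hP : P ∈ avg U) (x : B) :
    ‖P x‖ ≤ ‖x‖ := by
  refine avg_ind hP {P | ‖P x‖ ≤ ‖x‖} ?_ (fun g => (cj_norm U g x).le)
  intro P hP Q hQ a b ha hb hab
  change ‖a • P x + b • Q x‖ ≤ _
  have h1 : ‖P x‖ ≤ ‖x‖ := hP
  have h2 : ‖Q x‖ ≤ ‖x‖ := hQ
  calc ‖a • P x + b • Q x‖ ≤ a * ‖P x‖ + b * ‖Q x‖ := by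
        refine (norm_add_le _ _).trans ?_
        rw [norm_smul, norm_smul, Real.norm_of_nonneg ha, Real.norm_of_nonneg hb]
    _ ≤ a * ‖x‖ + b * ‖x‖ := by gcongr
    _ = ‖x‖ := by rw [← add_mul, hab, one_mul]

theorem avg_comp {U : G →* unitary B} {P Q : B →L[ℂ] B} (hP : P ∈ avg U) (hQ : Q ∈ avg U) :
    P.comp Q ∈ avg U := by
  have h1 : ∀ g, (cj U g).comp Q ∈ avg U := by
    intro g
    refine avg_ind hQ {Q | (cj U g).comp Q ∈ avg U} ?_ (fun h => ?_)
    · intro P hP Q hQ a b ha hb hab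
      change (cj U g).comp (a • P + b • Q) ∈ avg U
      have : (cj U g).comp (a • P + b • Q) = a • (cj U g).comp P + b • (cj U g).comp Q := by
        ext x
        change cj U g (a • P x + b • Q x) = a • cj U g (P x) + b • cj U g (Q x)
        simp only [← Complex.coe_smul, map_add, map_smul]
      rw [this]
      exact convex_convexHull ℝ _ hP hQ ha hb hab
    · refine subset_convexHull ℝ _ ⟨g * h, ?_⟩
      ext x; exact cj_mul U g h x
  refine avg_ind hP {P | P.comp Q ∈ avg U} ?_ h1
  intro P hP P' hP' a b ha hb hab
  change (a • P + b • P').comp Q ∈ avg U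
  have : (a • P + b • P').comp Q = a • P.comp Q + b • P'.comp Q := by
    ext x; rfl
  rw [this]
  exact convex_convexHull ℝ _ hP hP' ha hb hab

end P11

section P12
section gen
variable {B : Type*} [CStarAlgebra B] [PartialOrder B] [StarOrderedRing B]

theorem avg_inv {U : G →* unitary B} {P : B →L[ℂ] B} (hP : P ∈ avg U) (S : StarSubalgebra ℂ B)
    (φ : B →L[ℂ] ℂ) (a : B) (h : ∀ g, cj U g a ∈ S ∧ φ (cj U g a) = φ a) :
    P a ∈ S ∧ φ (P a) = φ a := by
  refine avg_ind hP {P | P a ∈ S ∧ φ (P a) = φ a} ?_ h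
  intro P hP Q hQ r t hr ht hrt
  have e : (r • P + t • Q) a = (r : ℂ) • P a + (t : ℂ) • Q a := rfl
  change (r • P + t • Q) a ∈ S ∧ φ ((r • P + t • Q) a) = φ a
  rw [e]
  refine ⟨add_mem (S.smul_mem hP.1 _) (S.smul_mem hQ.1 _), ?_⟩
  rw [map_add, map_smul, map_smul, hP.2, hQ.2, ← add_smul,
    ← Complex.ofReal_add, hrt, Complex.ofReal_one, one_smul]

theorem norm_three {U : G →* unitary B} {P' : B →L[ℂ] B} (hP' : P' ∈ avg U) {b : B} {ε : ℝ}
    (hε : 0 < ε) (h1 : b ≤ algebraMap ℝ B ε) (h2 : P' (-b) ≤ algebraMap ℝ B ε) :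
    ‖P' b‖ ≤ 3 * ε := by
  have hc : P' (algebraMap ℝ B ε) = algebraMap ℝ B ε := by
    rw [Algebra.algebraMap_eq_smul_one, ← Complex.coe_smul, map_smul, avg_one hP']
  have h3 : P' b ≤ algebraMap ℝ B ε := by
    have := avg_nonneg hP' (sub_nonneg.2 h1)
    rw [map_sub, hc] at this
    exact sub_nonneg.1 this
  rw [map_neg] at h2
  have h4 : 0 ≤ P' b + algebraMap ℝ B ε := by
    have := sub_nonneg.2 h2
    rwa [sub_neg_eq_add, add_comm] at this
  have h5 : ‖P' b + algebraMap ℝ B ε‖ ≤ 2 * ε := by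
    rw [CStarAlgebra.norm_le_iff_le_algebraMap _ (by positivity) h4, two_mul, map_add]
    exact add_le_add_left h3 _
  have h6 : ‖algebraMap ℝ B ε‖ ≤ ε := by
    have h7 : (0 : B) ≤ algebraMap ℝ B ε := by
      have := algebraMap_mono B hε.le
      rwa [map_zero] at this
    exact (CStarAlgebra.norm_le_iff_le_algebraMap _ hε.le h7).2 le_rfl
  calc ‖P' b‖ = ‖(P' b + algebraMap ℝ B ε) - algebraMap ℝ B ε‖ := by
        rw [add_sub_cancel_right]
    _ ≤ _ := norm_sub_le _ _
    _ ≤ 3 * ε := by linarith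
end gen

theorem eval_closed (ξ η : ℓ²(G, ℂ)) (s t : G) :
    IsClosed {a : BH G | a ξ s = a η t} := by
  have h : ∀ (ξ : ℓ²(G, ℂ)) (s : G), Continuous (fun a : BH G => a ξ s) := by
    intro ξ s
    have : (fun a : BH G => a ξ s) =
      fun a => (innerSL ℂ (dl s)) (ContinuousLinearMap.apply ℂ (ℓ²(G, ℂ)) ξ a) := by
      ext a; exact (dl_inner s (a ξ)).symm
    rw [this]
    exact (innerSL ℂ (dl s)).continuous.comp (ContinuousLinearMap.continuous _)
  exact isClosed_eq (h ξ s) (h η t)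

theorem rep_rt (x : MonoidAlgebra ℂ G) (g s : G) :
    (rep (perm G G) x) (dl g) s = (rep (perm G G) x) (dl 1) (s * g⁻¹) := by
  induction x using MonoidAlgebra.induction_linear with
  | zero => rw [map_zero]; rfl
  | add x y hx hy =>
    rw [map_add]
    exact congrArg₂ (· + ·) hx hy
  | single h c =>
    rw [rep_single]
    have e : (perm G G h : BH G) (dl g) s = (perm G G h : BH G) (dl 1) (s * g⁻¹) := by
      rw [perm_dl, perm_dl, dl_apply, dl_apply]
      have h1 : s * g⁻¹ = h • 1 ↔ s = h • g := by
        rw [smul_eq_mul, smul_eq_mul, mul_one, mul_inv_eq_iff_eq_mul]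
      by_cases h2 : s = h • g
      · rw [if_pos h2, if_pos (h1.2 h2)]
      · rw [if_neg h2, if_neg (fun h' => h2 (h1.1 h'))]
    exact congrArg (fun z => c * z) e

theorem red_rt {a : BH G} (ha : a ∈ redCstar G) (g s : G) : a (dl g) s = a (dl 1) (s * g⁻¹) := by
  have hc := eval_closed (dl g) (dl (1 : G)) s (s * g⁻¹)
  have : a ∈ closure {a : BH G | a (dl g) s = a (dl 1) (s * g⁻¹)} := by
    rw [Metric.mem_closure_iff]
    intro ε hε
    obtain ⟨x, hx⟩ := red_dense ha hε
    exact ⟨_, rep_rt x g s, by rw [dist_eq_norm]; exact hx⟩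
  rwa [hc.closure_eq] at this

/-- the trace on bounded operators. -/
def tr (G : Type u) [Group G] : BH G →L[ℂ] ℂ := vf (dl (1 : G))

theorem tr_apply (a : BH G) : tr G a = a (dl 1) 1 := by
  unfold tr; rw [vf_apply, dl_inner]

theorem tr_mem : StrongDual.toWeakDual (tr G) ∈ stSet (BH G) := vf_mem (dl_norm 1)

theorem tr_st : IsSt (tr G) := stSet_isSt tr_mem

theorem tr_tauF (a : redCstar G) : tauF G a = tr G (a : BH G) := by
  unfold tauF tr
  rw [vf_apply, deltaOne_eq]

theorem tr_cj {a : BH G} (ha : a ∈ redCstar G) (g : G) : tr G (cj (perm G G) g a) = tr G a := by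
  rw [tr_apply, tr_apply, cj_apply, mul_assoc, mul_apply_eq_comp, mul_apply_eq_comp, perm_dl,
    perm_apply, smul_eq_mul, mul_one, red_rt ha, mul_inv_cancel]

theorem cj_red {a : BH G} (ha : a ∈ redCstar G) (g : G) : cj (perm G G) g a ∈ redCstar G := by
  rw [cj_apply]
  exact mul_mem (mul_mem (perm_mem_red g) ha) (perm_mem_red g⁻¹)

theorem avg_red {P : BH G →L[ℂ] BH G} (hP : P ∈ avg (perm G G)) {a : BH G} (ha : a ∈ redCstar G) :
    P a ∈ redCstar G ∧ tr G (P a) = tr G a :=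
  avg_inv hP (redCstar G) (tr G) a (fun g => ⟨cj_red ha g, tr_cj ha g⟩)

open Classical in
theorem tr_perm (g : G) : tr G (perm G G g : BH G) = if g = 1 then 1 else 0 := by
  rw [tr_apply, perm_dl, dl_apply]
  simp [eq_comm]

open Classical in
theorem agree {ω : WeakDual ℂ (BH G)} (h1 : ω ∈ stSet (BH G)) (x : MonoidAlgebra ℂ G)
    (h : ∀ t ∈ x.coeff.support.erase 1, ω (perm G G t : BH G) = 0) :
    ω (rep (perm G G) x) = tr G (rep (perm G G) x) := by
  have e : rep (perm G G) x = ∑ t ∈ x.coeff.support, x.coeff t • (perm G G t : BH G) := by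
    conv_lhs => rw [← MonoidAlgebra.sum_coeff_single x]
    rw [Finsupp.sum, map_sum]
    exact Finset.sum_congr rfl fun t _ => rep_single _ _ _
  rw [e, map_sum, map_sum]
  refine Finset.sum_congr rfl fun t ht => ?_
  rw [map_smul, map_smul, tr_perm]
  by_cases h0 : t = 1
  · subst h0
    have e1 : ω (perm G G 1 : BH G) = 1 := by
      rw [map_one]; exact h1.1
    rw [if_pos rfl, e1]
  · rw [if_neg h0, h t (Finset.mem_erase.2 ⟨h0, ht⟩)]

theorem one_sided (hs : IsCstarSimple G) {a : BH G} (ha : a ∈ redCstar G) (hsa : IsSelfAdjoint a)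
    (h0 : tr G a = 0) {ε : ℝ} (hε : 0 < ε) :
    ∃ P ∈ avg (perm G G), P a ≤ algebraMap ℝ (BH G) ε := by
  classical
  by_contra hcon
  push Not at hcon
  let ev : (BH G →L[ℂ] BH G) →ₗ[ℝ] BH G :=
    { toFun := fun P => P a, map_add' := fun _ _ => rfl, map_smul' := fun _ _ => rfl }
  have hKc : Convex ℝ (ev '' avg (perm G G)) := (convex_convexHull ℝ _).linear_image ev
  have hg : ∀ g, cj (perm G G) g ∈ avg (perm G G) := fun g => subset_convexHull ℝ _ ⟨g, rfl⟩
  obtain ⟨s, hs1, hs2⟩ := sep_state hKc ⟨_, ⟨_, hg 1, rfl⟩⟩ (by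
    rintro _ ⟨P, hP, rfl⟩
    change star (P a) = P a
    rw [← avg_star hP, hsa.star_eq]) hε (by
    rintro _ ⟨P, hP, rfl⟩
    exact hcon P hP)
  have hS : Good (perm G G) {ω | ω ∈ stSet (BH G) ∧ ∀ g, ε ≤ (ω (cj (perm G G) g a)).re} := by
    refine ⟨fun _ h => h.1, ?_, ?_, ?_, ⟨s, hs1, fun g => hs2 _ ⟨_, hg g, rfl⟩⟩⟩
    · have : {ω | ω ∈ stSet (BH G) ∧ ∀ g, ε ≤ (ω (cj (perm G G) g a)).re} =
        stSet (BH G) ∩ ⋂ g : G, {ω | ε ≤ (ω (cj (perm G G) g a)).re} := by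
        ext ρ; simp
      rw [this]
      exact isClosed_stSet.inter (isClosed_iInter fun g =>
        isClosed_le continuous_const (Complex.continuous_re.comp (wd_eval_continuous _)))
    · intro φ hφ ψ hψ r t hr ht hrt
      refine ⟨convex_stSet hφ.1 hψ.1 hr ht hrt, fun g => ?_⟩
      change ε ≤ (r • φ _ + t • ψ _).re
      rw [Complex.add_re, Complex.smul_re, Complex.smul_re, smul_eq_mul, smul_eq_mul]
      calc ε = r * ε + t * ε := by rw [← add_mul, hrt, one_mul]
        _ ≤ _ := by gcongr; exacts [hφ.2 g, hψ.2 g]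
    · intro g φ hφ
      refine ⟨act_stSet _ g hφ.1, fun t => ?_⟩
      rw [act_apply, ← cj_mul]
      exact hφ.2 _
  obtain ⟨x, hx⟩ := red_dense ha (half_pos hε)
  obtain ⟨ω, hω, hk⟩ := kill hs hS (x.coeff.support.erase 1) (Finset.notMem_erase _ _)
  have e := agree hω.1 x hk
  have h1 : ε ≤ (ω a).re := by simpa [cj_one] using hω.2 1
  have h2 : ‖ω (a - rep (perm G G) x)‖ ≤ ‖a - rep (perm G G) x‖ := hω.1.2 _
  have h3 : ‖tr G (a - rep (perm G G) x)‖ ≤ ‖a - rep (perm G G) x‖ := tr_st.2 _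
  have h4 : ω a = ω (a - rep (perm G G) x) - tr G (a - rep (perm G G) x) := by
    rw [map_sub, map_sub, e, h0]; ring
  have h5 : ‖ω a‖ < ε := by
    rw [h4]
    refine (norm_sub_le _ _).trans_lt ?_
    linarith
  exact absurd (h1.trans (Complex.re_le_norm _)) (not_le.2 h5)

theorem two_sided (hs : IsCstarSimple G) {a : BH G} (ha : a ∈ redCstar G) (hsa : IsSelfAdjoint a)
    (h0 : tr G a = 0) {ε : ℝ} (hε : 0 < ε) :
    ∃ P ∈ avg (perm G G), ‖P a‖ ≤ 3 * ε := by
  obtain ⟨P, hP, h1⟩ := one_sided hs ha hsa h0 hε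
  have hr := avg_red hP ha
  have hsa' : IsSelfAdjoint (P a) := by
    change star (P a) = P a
    rw [← avg_star hP, hsa.star_eq]
  obtain ⟨P', hP', h2⟩ := one_sided hs (neg_mem hr.1) hsa'.neg
    (by rw [map_neg, hr.2, h0, neg_zero]) hε
  refine ⟨P'.comp P, avg_comp hP' hP, ?_⟩
  exact norm_three hP' hε h1 h2

theorem star_red {a : BH G} (ha : a ∈ redCstar G) : star a ∈ redCstar G := star_mem ha

theorem general (hs : IsCstarSimple G) {a : BH G} (ha : a ∈ redCstar G)
    (h0 : tr G a = 0) {ε : ℝ} (hε : 0 < ε) :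
    ∃ P ∈ avg (perm G G), ‖P a‖ ≤ 6 * ε := by
  have hst : tr G (star a) = 0 := by rw [tr_st.map_star, h0, star_zero]
  let x : BH G := a + star a
  let y : BH G := Complex.I • (a - star a)
  have hx : x ∈ redCstar G := add_mem ha (star_red ha)
  have hy : y ∈ redCstar G := (redCstar G).smul_mem (sub_mem ha (star_red ha)) _
  have hxs : IsSelfAdjoint x := IsSelfAdjoint.add_star_self a
  have hys : IsSelfAdjoint y := by
    change star (Complex.I • (a - star a)) = Complex.I • (a - star a)
    rw [star_smul, star_sub, star_star, Complex.star_def, Complex.conj_I, neg_smul, ← smul_neg,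
      neg_sub]
  have htx : tr G x = 0 := by simp only [x, map_add, h0, hst, add_zero]
  have hty : tr G y = 0 := by simp only [y, map_smul, map_sub, h0, hst, sub_zero, smul_zero]
  obtain ⟨P, hP, h1⟩ := two_sided hs hx hxs htx hε
  have hr := avg_red hP hy
  have hsa' : IsSelfAdjoint (P y) := by
    change star (P y) = P y
    rw [← avg_star hP, hys.star_eq]
  obtain ⟨P', hP', h2⟩ := two_sided hs hr.1 hsa' (hr.2.trans hty) hε
  refine ⟨P'.comp P, avg_comp hP' hP, ?_⟩
  have e : a = (1 / 2 : ℂ) • x - (Complex.I / 2) • y := by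
    simp only [x, y, smul_smul]
    rw [show Complex.I / 2 * Complex.I = -(1 / 2) by
      rw [div_mul_eq_mul_div, Complex.I_mul_I]; ring]
    module
  change ‖P' (P a)‖ ≤ _
  have e2 : P' (P a) = (1 / 2 : ℂ) • P' (P x) - (Complex.I / 2) • P' (P y) := by
    conv_lhs => rw [e]
    simp only [map_sub, map_smul]
  have h3 := avg_norm hP' (P x)
  rw [e2]
  refine (norm_sub_le _ _).trans ?_
  rw [norm_smul, norm_smul, norm_div, norm_div, Complex.norm_I, norm_one]
  simp only [Complex.norm_ofNat]
  linarith

theorem final_avg (hs : IsCstarSimple G) {a : BH G} (ha : a ∈ redCstar G) {ε : ℝ} (hε : 0 < ε) :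
    ∃ P ∈ avg (perm G G), ‖P a - tr G a • 1‖ ≤ ε := by
  obtain ⟨P, hP, h⟩ := general hs (a := a - tr G a • 1)
    (sub_mem ha ((redCstar G).smul_mem (one_mem _) _)) (by
      rw [map_sub, map_smul, tr_st.1, smul_eq_mul, mul_one, sub_self]) (ε := ε / 6) (by positivity)
  refine ⟨P, hP, ?_⟩
  rw [map_sub, map_smul, avg_one hP] at h
  linarith

end P12

section P13

theorem sep_sub {E : Type*} [NormedAddCommGroup E] [NormedSpace ℂ E] (p : Submodule ℂ E)
    (hp : IsClosed (p : Set E)) {x : E} (hx : x ∉ p) :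
    ∃ f : E →L[ℂ] ℂ, (∀ z ∈ p, f z = 0) ∧ f x ≠ 0 := by
  have hc : Convex ℝ (p : Set E) := (p.restrictScalars ℝ).convex
  have hsep := RCLike.geometric_hahn_banach_closed_point (𝕜 := ℂ) (E := E) hc hp hx
  obtain ⟨f, u, h1, h2⟩ := hsep
  have hu : 0 < u := by simpa using h1 0 p.zero_mem
  refine ⟨f, fun z hz => ?_, fun h => ?_⟩
  · by_contra h0
    have h3 := h1 (((u : ℂ) / f z) • z) (p.smul_mem _ hz)
    rw [map_smul, smul_eq_mul, div_mul_cancel₀ _ h0] at h3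
    exact lt_irrefl _ h3
  · rw [h] at h2
    exact absurd h2 (not_lt.2 (by simpa using hu.le))

theorem coe_uu (g : G) : ((uu g : redCstar G) : BH G) = (perm G G g : BH G) := by
  rw [perm_eq_lreg]; unfold uu; rfl

theorem coe_conj (g : G) (a : redCstar G) :
    ((uu g * a * uu g⁻¹ : redCstar G) : BH G) = cj (perm G G) g (a : BH G) := by
  rw [cj_apply, ← coe_uu, ← coe_uu]; rfl

theorem avg_lift (a : redCstar G) {P : BH G →L[ℂ] BH G} (hP : P ∈ avg (perm G G)) :
    ∃ b ∈ convexHull ℝ {b : redCstar G | ∃ g : G, b = uu g * a * uu g⁻¹},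
      (b : BH G) = P (a : BH G) := by
  refine avg_ind hP {P | ∃ b ∈ convexHull ℝ {b : redCstar G | ∃ g : G, b = uu g * a * uu g⁻¹},
      (b : BH G) = P (a : BH G)} ?_ (fun g => ⟨_, subset_convexHull ℝ _ ⟨g, rfl⟩, coe_conj g a⟩)
  rintro P ⟨b, hb, hbP⟩ Q ⟨c, hc, hcQ⟩ r t hr ht hrt
  refine ⟨r • b + t • c, convex_convexHull ℝ _ hb hc hr ht hrt, ?_⟩
  change r • (b : BH G) + t • (c : BH G) = r • P (a : BH G) + t • Q (a : BH G)
  rw [hbP, hcQ]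

theorem forward (hs : IsCstarSimple G) (φ : redCstar G →L[ℂ] ℂ) (a : redCstar G) :
    sInf ((fun b => ‖φ b - φ 1 * tauF G a‖) ''
      closure (convexHull ℝ {b : redCstar G | ∃ g : G, b = uu g * a * uu g⁻¹})) = 0 := by
  apply le_antisymm
  · apply le_of_forall_pos_le_add
    intro ε hε
    rw [zero_add]
    have hδ : 0 < ε / (‖φ‖ + 1) := by positivity
    obtain ⟨P, hP, h⟩ := final_avg hs a.2 hδ
    obtain ⟨b, hb, hbP⟩ := avg_lift a hP
    have h1 : ‖b - tauF G a • (1 : redCstar G)‖ ≤ ε / (‖φ‖ + 1) := by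
      rw [← hbP, ← tr_tauF] at h
      exact h
    have h2 : φ b - φ 1 * tauF G a = φ (b - tauF G a • (1 : redCstar G)) := by
      rw [map_sub, map_smul, smul_eq_mul, mul_comm]
    refine (csInf_le ⟨0, ?_⟩ (Set.mem_image_of_mem _ (subset_closure hb))).trans ?_
    · rintro _ ⟨b, -, rfl⟩; exact norm_nonneg _
    · change ‖φ b - φ 1 * tauF G a‖ ≤ ε
      rw [h2]
      calc ‖φ (b - tauF G a • (1 : redCstar G))‖ ≤ ‖φ‖ * (ε / (‖φ‖ + 1)) :=
            (φ.le_opNorm _).trans (by gcongr)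
        _ ≤ (‖φ‖ + 1) * (ε / (‖φ‖ + 1)) := by gcongr; linarith
        _ = ε := by field_simp
  · apply Real.sInf_nonneg
    rintro _ ⟨b, -, rfl⟩; exact norm_nonneg _

theorem red_zero {x : BH G} (hx : x ∈ redCstar G) (h : tr G (star x * x) = 0) : x = 0 := by
  have h1 : x (dl 1) = 0 := by
    have h2 : tr G (star x * x) = inner ℂ (x (dl 1)) (x (dl 1)) := by
      unfold tr
      rw [vf_apply, mul_apply_eq_comp, ContinuousLinearMap.star_eq_adjoint,
        ContinuousLinearMap.adjoint_inner_right]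
    rw [h2] at h
    exact inner_self_eq_zero.1 h
  have h2 : ∀ g, x (dl g) = 0 := by
    intro g; ext s
    rw [red_rt hx, h1]; rfl
  have h3 : (⊤ : Submodule ℂ (ℓ²(G, ℂ))) ≤ LinearMap.ker (x : ℓ²(G, ℂ) →ₗ[ℂ] ℓ²(G, ℂ)) := by
    rw [← dl_dense]
    refine Submodule.topologicalClosure_minimal _ ?_ x.isClosed_ker
    rw [Submodule.span_le]
    rintro _ ⟨g, rfl⟩
    exact h2 g
  apply ContinuousLinearMap.ext
  intro ξ
  exact h3 (Submodule.mem_top (x := ξ))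

/-- a two-sided ideal as a submodule -/
def idSub (I : TwoSidedIdeal (redCstar G)) : Submodule ℂ (redCstar G) where
  carrier := I
  zero_mem' := I.zero_mem
  add_mem' ha hb := I.add_mem ha hb
  smul_mem' c x hx := by
    have : c • x = (c • 1) * x := by rw [smul_mul_assoc, one_mul]
    rw [this]; exact I.mul_mem_left _ _ hx

theorem backward (h : ∀ (φ : redCstar G →L[ℂ] ℂ) (a : redCstar G),
        sInf ((fun b => ‖φ b - φ 1 * tauF G a‖) ''
          closure (convexHull ℝ {b : redCstar G | ∃ g : G, b = uu g * a * uu g⁻¹})) = 0) :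
    IsCstarSimple G := by
  intro I hI
  by_contra hcon
  push Not at hcon
  obtain ⟨hbot, htop⟩ := hcon
  have h1 : (1 : redCstar G) ∉ idSub I := by
    intro h1
    apply htop
    rw [eq_top_iff]
    intro x _
    have := I.mul_mem_left x 1 h1
    rwa [mul_one] at this
  obtain ⟨x, hx, hx0⟩ : ∃ x ∈ I, x ≠ 0 := by
    by_contra hne
    push Not at hne
    apply hbot
    rw [eq_bot_iff]
    intro x hx
    rw [hne x hx]; exact TwoSidedIdeal.zero_mem _
  obtain ⟨φ, hφ, hφ1⟩ := sep_sub (idSub I) hI h1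
  have ht : tauF G (star x * x) ≠ 0 := by
    intro h0
    rw [tr_tauF] at h0
    exact hx0 (Subtype.ext (red_zero x.2 h0))
  have hc : Convex ℝ (idSub I : Set (redCstar G)) := by
    intro a ha b hb r t _ _ _
    exact (idSub I).add_mem ((idSub I).smul_mem (r : ℂ) ha) ((idSub I).smul_mem (t : ℂ) hb)
  have hK : closure (convexHull ℝ {b : redCstar G | ∃ g : G, b = uu g * (star x * x) * uu g⁻¹}) ⊆
      (idSub I : Set (redCstar G)) := by
    refine closure_minimal (convexHull_min ?_ hc) hI
    rintro _ ⟨g, rfl⟩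
    exact I.mul_mem_right _ _ (I.mul_mem_left _ _ (I.mul_mem_left _ _ hx))
  have hval := h φ (star x * x)
  have hset : (fun b => ‖φ b - φ 1 * tauF G (star x * x)‖) ''
      closure (convexHull ℝ {b : redCstar G | ∃ g : G, b = uu g * (star x * x) * uu g⁻¹}) =
      {‖φ 1 * tauF G (star x * x)‖} := by
    refine Set.Subset.antisymm ?_ ?_
    · rintro _ ⟨b, hb, rfl⟩
      change ‖φ b - _‖ = _
      rw [hφ b (hK hb), zero_sub, norm_neg]
    · rintro _ rfl
      have hb := subset_closure (subset_convexHull ℝ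
        {b : redCstar G | ∃ g : G, b = uu g * (star x * x) * uu g⁻¹} ⟨1, rfl⟩)
      refine ⟨_, hb, ?_⟩
      change ‖φ _ - _‖ = _
      rw [hφ _ (hK hb), zero_sub, norm_neg]
  rw [hset, csInf_singleton, norm_eq_zero] at hval
  exact mul_ne_zero hφ1 ht hval

end P13

/-- A discrete group is C*-simple if and only if for every bounded linear functional `φ` on
`C*_λ(G)` and every `a ∈ C*_λ(G)`, the infimum of `|φ(b) - φ(1)τ_λ(a)|` over the norm closed
convex hull `K` of the conjugates of `a` is `0`. -/
theorem cstarSimple_iff_weak_averaging (G : Type u) [Group G] :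
    IsCstarSimple G ↔
      ∀ (φ : redCstar G →L[ℂ] ℂ) (a : redCstar G),
        sInf ((fun b => ‖φ b - φ 1 * tauF G a‖) ''
          closure (convexHull ℝ {b : redCstar G | ∃ g : G, b = uu g * a * uu g⁻¹})) = 0 := by
  exact ⟨fun hs φ a => forward hs φ a, backward⟩
end
end

section
/- Let G be a discrete group with an amenable recurrent subgroup H, and let X be a G-boundary. Then the action of G on X is not free: there exist x ∈ X and g ∈ G ∖ {e} with gx = x. -/
noncomputable section
open scoped ENNReal ComplexOrder
open MeasureTheory
set_option maxHeartbeats 1000000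
set_option synthInstance.maxHeartbeats 1000000

universe u

variable {G : Type u} [Group G]

variable (G) in
/-- The Chabauty topology on the space of subgroups of `G`: the topology induced from the
product topology on `{0,1}^G` by identifying a subgroup with its indicator function. -/
def chabauty : TopologicalSpace (Subgroup G) :=
  letI : ∀ p : Prop, Decidable p := Classical.propDecidable
  TopologicalSpace.induced (fun (H : Subgroup G) (g : G) => decide (g ∈ H))
    (inferInstance : TopologicalSpace (G → Bool))

attribute [instance] chabauty

/-- The conjugate subgroup `gHg⁻¹`. -/
def conjSub (g : G) (H : Subgroup G) : Subgroup G :=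
  H.map (MulAut.conj g).toMonoidHom

/-- `H` is a recurrent subgroup of `G`: the trivial subgroup does not belong to the Chabauty
closure of the set of conjugates of `H`. -/
def IsRecurrent (H : Subgroup G) : Prop :=
  (⊥ : Subgroup G) ∉ closure {K : Subgroup G | ∃ g : G, K = conjSub g H}

/-- Left translation of a bounded function on a group `H`. -/
def translInfty {H : Type*} [Group H] (h : H) (f : lp (fun _ : H => ℝ) ∞) :
    lp (fun _ : H => ℝ) ∞ :=
  ⟨fun k => f (h⁻¹ * k), by
    apply memℓp_infty
    have : (Set.range fun k => ‖f (h⁻¹ * k)‖) = Set.range fun k => ‖f k‖ :=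
      (Equiv.mulLeft h⁻¹).surjective.range_comp (fun k => ‖f k‖)
    rw [this]
    exact memℓp_infty_iff.1 (lp.memℓp f)⟩

/-- A group `H` is amenable: there exists a left-invariant mean on `ℓ∞(H)`, i.e. a unital
positive linear functional invariant under left translation. -/
def IsAmenable (H : Type*) [Group H] : Prop :=
  ∃ m : lp (fun _ : H => ℝ) ∞ →ₗ[ℝ] ℝ,
    m 1 = 1 ∧ (∀ f : lp (fun _ : H => ℝ) ∞, (∀ k, 0 ≤ f k) → 0 ≤ m f) ∧
      ∀ (h : H) (f : lp (fun _ : H => ℝ) ∞), m (translInfty h f) = m f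

/-- `X` is a `G`-boundary: a nonempty compact Hausdorff `G`-space such that for every regular
Borel probability measure `μ` on `X` and every `x ∈ X`, the point mass `δ_x` lies in the
weak* closure of the orbit `Gμ`. -/
def IsBoundary (G X : Type*) [Group G] [TopologicalSpace X] [CompactSpace X] [T2Space X]
    [MulAction G X] [ContinuousConstSMul G X] : Prop :=
  Nonempty X ∧
  letI : MeasurableSpace X := borel X
  haveI : BorelSpace X := ⟨rfl⟩
  ∀ (μ : ProbabilityMeasure X) (x : X),
    (⟨Measure.dirac x, Measure.dirac.isProbabilityMeasure⟩ : ProbabilityMeasure X) ∈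
      closure {ν : ProbabilityMeasure X |
        ∃ g : G, ν = μ.map ((continuous_const_smul g).measurable.aemeasurable (μ := μ.toMeasure))
          (f := (g • ·))}

theorem IsRecurrent.exists_finset {H : Subgroup G} (hR : IsRecurrent H) :
    ∃ F : Finset G, (1 : G) ∉ F ∧ ∀ g : G, ∃ t ∈ F, t ∈ conjSub g H := by
  classical
  unfold IsRecurrent at hR
  rw [mem_closure_iff] at hR
  push Not at hR
  obtain ⟨o, ho, hbot, hdisj⟩ := hR
  obtain ⟨V, hV, rfl⟩ := isOpen_induced_iff.1 ho
  obtain ⟨I, w, hw, hsub⟩ := isOpen_pi_iff.1 hV _ hbot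
  refine ⟨I.erase 1, by simp, fun g => ?_⟩
  by_contra! hcon
  have : conjSub g H ∈ (∅ : Set (Subgroup G)) := by
    rw [← hdisj]
    refine ⟨hsub ?_, g, rfl⟩
    intro i hi
    have h2 := (hw i hi).2
    convert h2 using 1
    by_cases h1 : i = 1
    · subst h1; simp [one_mem]
    · have := hcon i (Finset.mem_erase.2 ⟨h1, hi⟩)
      simp [this, Subgroup.mem_bot, h1]
  exact this

/-- The bounded function `k ↦ f (k • x)` on a subgroup. -/
def orbitFn {X : Type*} [TopologicalSpace X] [CompactSpace X] [MulAction G X]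
    (H : Subgroup G) (x : X) (f : C(X, ℝ)) : lp (fun _ : H => ℝ) ∞ :=
  ⟨fun k => f ((k : G) • x), by
    apply memℓp_infty
    refine ⟨‖f‖, ?_⟩
    rintro _ ⟨k, rfl⟩
    exact f.norm_coe_le_norm _⟩

theorem exists_invariant {X : Type*} [TopologicalSpace X] [CompactSpace X] [T2Space X]
    [MulAction G X] [ContinuousConstSMul G X] [MeasurableSpace X] [BorelSpace X] [Nonempty X]
    (H : Subgroup G) (hA : IsAmenable H) :
    ∃ μ : ProbabilityMeasure X, ∀ (h : G), h ∈ H → ∀ f : C(X, ℝ),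
      ∫ y, f (h • y) ∂(μ : Measure X) = ∫ y, f y ∂(μ : Measure X) := by
  obtain ⟨m, m1, mpos, minv⟩ := hA
  obtain ⟨x⟩ := ‹Nonempty X›
  let L : CompactlySupportedContinuousMap X ℝ →ₗ[ℝ] ℝ :=
    { toFun := fun f => m (orbitFn H x f.toContinuousMap)
      map_add' := fun f g => by rw [← map_add]; rfl
      map_smul' := fun c f => by rw [← map_smul]; rfl }
  let Λ : CompactlySupportedContinuousMap X ℝ →ₚ[ℝ] ℝ :=
    PositiveLinearMap.mk₀ L (fun f hf => mpos _ (fun k => hf _))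
  have key : ∀ f : C(X, ℝ), ∫ y, f y ∂(RealRMK.rieszMeasure Λ) = m (orbitFn H x f) := fun f =>
    RealRMK.integral_rieszMeasure Λ (CompactlySupportedContinuousMap.continuousMapEquiv f)
  have hp : IsProbabilityMeasure (RealRMK.rieszMeasure Λ) := by
    have h1 := key 1
    have : orbitFn H x (1 : C(X, ℝ)) = 1 := rfl
    rw [this, m1] at h1
    simp [Measure.real] at h1
    refine ⟨?_⟩
    rwa [ENNReal.toReal_eq_one_iff] at h1
  refine ⟨⟨RealRMK.rieszMeasure Λ, hp⟩, fun h hh f => ?_⟩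
  have e1 := key (f.comp ⟨fun y => h • y, continuous_const_smul h⟩)
  have e2 := key f
  have : orbitFn H x (f.comp ⟨fun y => h • y, continuous_const_smul h⟩)
      = translInfty (⟨h, hh⟩ : H)⁻¹ (orbitFn H x f) := by
    ext k
    simp [orbitFn, translInfty, mul_smul]
  rw [this, minv, ← e2] at e1
  exact e1

/-- If a discrete group `G` has an amenable recurrent subgroup, then no `G`-boundary has a
free `G`-action. -/
theorem boundary_action_not_free_of_amenable_recurrent
    (G : Type u) [Group G] (H : Subgroup G) (hA : IsAmenable H) (hR : IsRecurrent H)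
    (X : Type*) [TopologicalSpace X] [CompactSpace X] [T2Space X]
    [MulAction G X] [ContinuousConstSMul G X] (hX : IsBoundary G X) :
    ∃ (x : X) (g : G), g ≠ 1 ∧ g • x = x := by
  obtain ⟨F, hF1, hF⟩ := hR.exists_finset
  let _ : MeasurableSpace X := borel X
  have : BorelSpace X := ⟨rfl⟩
  obtain ⟨hne, hb⟩ := hX
  obtain ⟨μ, hμ⟩ := exists_invariant (X := X) H hA
  obtain ⟨x⟩ := hne
  have hx := hb μ x
  let A : G → Set (ProbabilityMeasure X) := fun t =>
    {ν | ∀ f : C(X, ℝ), ∫ y, f (t • y) ∂(ν : Measure X) = ∫ y, f y ∂(ν : Measure X)}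
  have hAc : ∀ t, IsClosed (A t) := by
    intro t
    have : A t = ⋂ f : C(X, ℝ), {ν : ProbabilityMeasure X | ∫ y, f (t • y) ∂(ν : Measure X)
        = ∫ y, f y ∂(ν : Measure X)} := by
      ext; simp [A]
    rw [this]
    refine isClosed_iInter fun f => isClosed_eq ?_ ?_
    · exact ProbabilityMeasure.continuous_integral_boundedContinuousFunction
        (BoundedContinuousFunction.mkOfCompact
          (f.comp ⟨fun y => t • y, continuous_const_smul t⟩))
    · exact ProbabilityMeasure.continuous_integral_boundedContinuousFunction
        (BoundedContinuousFunction.mkOfCompact f)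
  have hcl : IsClosed (⋃ t ∈ F, A t) := F.finite_toSet.isClosed_biUnion fun t _ => hAc t
  have hmem : _ ∈ ⋃ t ∈ F, A t := closure_minimal ?_ hcl hx
  · obtain ⟨t, ht, hxt⟩ := Set.mem_iUnion₂.1 hmem
    refine ⟨x, t, fun h => hF1 (h ▸ ht), ?_⟩
    by_contra hne
    obtain ⟨f, hf0, hf1, -⟩ := exists_continuous_zero_one_of_isClosed
      (isClosed_singleton (x := t • x)) (isClosed_singleton (x := x)) (by simpa using hne)
    have := hxt f
    have c1 : StronglyMeasurable (fun y => f (t • y)) :=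
      ((f.continuous.comp (continuous_const_smul t)).measurable).stronglyMeasurable
    have c2 : StronglyMeasurable (fun y => f y) := f.continuous.measurable.stronglyMeasurable
    simp only [ProbabilityMeasure.coe_mk] at this
    rw [integral_dirac' _ _ c1, integral_dirac' _ _ c2] at this
    have h0 := hf0 rfl
    have h1 := hf1 rfl
    simp at h0 h1
    rw [h0, h1] at this
    norm_num at this
  · rintro _ ⟨g, rfl⟩
    obtain ⟨t, ht, h, hh, rfl⟩ := hF g
    refine Set.mem_biUnion ht ?_
    intro f
    have mg : Measurable (fun y : X => g • y) := (continuous_const_smul g).measurable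
    rw [ProbabilityMeasure.toMeasure_map,
      integral_map_of_stronglyMeasurable mg f.continuous.measurable.stronglyMeasurable,
      integral_map_of_stronglyMeasurable mg (f := fun y => f (_ • y))
        ((f.continuous.comp (continuous_const_smul _)).measurable).stronglyMeasurable]
    have := hμ h hh (f.comp ⟨fun y => g • y, continuous_const_smul g⟩)
    simpa [mul_smul] using this
end
end
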